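/- arXiv:0704.1851 — 10 statements merged into one kernel-verified Lean document; each statement's English description precedes it below -/
import Mathlib

section
/- Let f : (0,∞) → ℝ be a differentiable function satisfying the Riccati differential inequality f'(t) + f(t)²/3 - 12 ≤ 0 for all t > 0, together with the initial asymptotic condition lim_{t→0⁺} t·f(t) = 3. Then f(t) ≤ 6·coth(2t) for every t > 0. -/
open Real Set Filter

/-!
Let `s'' = q s`, so that `m s' / s` solves the Riccati equation `u' + u² / m = m q`. If
`f' + f² / m ≤ m q`, then `s² (f - m s' / s) = s (s f - m s')` is nonincreasing: its derivative is
at most `-(s f - m s')² / m`. It vanishes where `s` does, hence `f ≤ m s' / s` to the right of any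
zero `c` of `s` at which `f` is regular. For `q = k²` take `s t = sinh (k (t - c))` and let `c`
decrease to the left endpoint of the domain of `f`: a larger value of `f` would force a blow-up at
an interior point.
-/

section Sturm

variable {m : ℝ} {f f' s s' q : ℝ → ℝ}

theorem hasDerivAt_mul_sub_of_jacobi {t : ℝ} (hm : m ≠ 0) (hf : HasDerivAt f (f' t) t)
    (hs : HasDerivAt s (s' t) t) (hs' : HasDerivAt s' (q t * s t) t) :
    HasDerivAt (fun x => s x * (s x * f x - m * s' x))
      (s t ^ 2 * (f' t + f t ^ 2 / m - m * q t) - (s t * f t - m * s' t) ^ 2 / m) t := by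
  refine (hs.mul ((hs.mul hf).sub (hs'.const_mul m))).congr_deriv ?_
  simp only [Pi.mul_apply, Pi.sub_apply]
  field_simp
  ring

theorem antitoneOn_mul_sub_of_riccati_le {D : Set ℝ} (hD : Convex ℝ D) (hm : 0 < m)
    (hf : ∀ t ∈ D, HasDerivAt f (f' t) t) (hs : ∀ t ∈ D, HasDerivAt s (s' t) t)
    (hs' : ∀ t ∈ D, HasDerivAt s' (q t * s t) t)
    (hric : ∀ t ∈ D, f' t + f t ^ 2 / m ≤ m * q t) :
    AntitoneOn (fun t => s t * (s t * f t - m * s' t)) D := by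
  have hderiv := fun t ht =>
    hasDerivAt_mul_sub_of_jacobi hm.ne' (hf t ht) (hs t ht) (hs' t ht)
  refine antitoneOn_of_hasDerivWithinAt_nonpos hD
    (fun t ht => (hderiv t ht).continuousAt.continuousWithinAt)
    (fun t ht => (hderiv t (interior_subset ht)).hasDerivWithinAt) fun t ht => ?_
  have hdefect : s t ^ 2 * (f' t + f t ^ 2 / m - m * q t) ≤ 0 :=
    mul_nonpos_of_nonneg_of_nonpos (sq_nonneg _) (sub_nonpos.2 (hric t (interior_subset ht)))
  have hsquare : 0 ≤ (s t * f t - m * s' t) ^ 2 / m := by positivity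
  linarith

theorem le_mul_div_of_riccati_le {c T : ℝ} (hcT : c ≤ T) (hm : 0 < m)
    (hf : ∀ t ∈ Icc c T, HasDerivAt f (f' t) t) (hs : ∀ t ∈ Icc c T, HasDerivAt s (s' t) t)
    (hs' : ∀ t ∈ Icc c T, HasDerivAt s' (q t * s t) t)
    (hric : ∀ t ∈ Icc c T, f' t + f t ^ 2 / m ≤ m * q t) (hsc : s c = 0) (hsT : s T ≠ 0) :
    f T ≤ m * s' T / s T := by
  have hT : s T * (s T * f T - m * s' T) ≤ 0 := by
    simpa [hsc] using antitoneOn_mul_sub_of_riccati_le (convex_Icc c T) hm hf hs hs' hric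
      (left_mem_Icc.2 hcT) (right_mem_Icc.2 hcT) hcT
  have hfactor : s T * (s T * f T - m * s' T) = s T ^ 2 * (f T - m * s' T / s T) := by
    field_simp
  rw [hfactor] at hT
  exact sub_nonpos.1 (nonpos_of_mul_nonpos_right hT (by positivity))

end Sturm

section Coth

variable {m k : ℝ} {f f' : ℝ → ℝ}

theorem le_mul_coth_of_riccati_le_of_Icc {c T : ℝ} (hm : 0 < m) (hk : k ≠ 0) (hcT : c < T)
    (hf : ∀ t ∈ Icc c T, HasDerivAt f (f' t) t)
    (hric : ∀ t ∈ Icc c T, f' t + f t ^ 2 / m ≤ m * k ^ 2) :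
    f T ≤ m * k * cosh (k * (T - c)) / sinh (k * (T - c)) := by
  have hlin (t : ℝ) : HasDerivAt (fun x => k * (x - c)) k t := by
    simpa using ((hasDerivAt_id t).sub_const c).const_mul k
  have hs (t : ℝ) : HasDerivAt (fun x => sinh (k * (x - c))) (k * cosh (k * (t - c))) t :=
    (hlin t).sinh.congr_deriv (mul_comm _ _)
  have hs' (t : ℝ) :
      HasDerivAt (fun x => k * cosh (k * (x - c))) (k ^ 2 * sinh (k * (t - c))) t :=
    ((hlin t).cosh.const_mul k).congr_deriv (by ring)
  have hsT : sinh (k * (T - c)) ≠ 0 := sinh_ne_zero.2 (mul_ne_zero hk (sub_pos.2 hcT).ne')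
  simpa only [mul_assoc] using le_mul_div_of_riccati_le hcT.le hm hf (fun t _ => hs t)
    (fun t _ => hs' t) hric (by simp) hsT

theorem riccati_comparison_coth_general {a T : ℝ} (hm : 0 < m) (hk : k ≠ 0) (haT : a < T)
    (hf : ∀ t ∈ Ioc a T, HasDerivAt f (f' t) t)
    (hric : ∀ t ∈ Ioc a T, f' t + f t ^ 2 / m ≤ m * k ^ 2) :
    f T ≤ m * k * cosh (k * (T - a)) / sinh (k * (T - a)) := by
  have hsinh : sinh (k * (T - a)) ≠ 0 := sinh_ne_zero.2 (mul_ne_zero hk (sub_pos.2 haT).ne')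
  have hcont : ContinuousAt (fun c => m * k * cosh (k * (T - c)) / sinh (k * (T - c))) a :=
    ContinuousAt.div (by fun_prop) (by fun_prop) hsinh
  refine ge_of_tendsto (hcont.tendsto.mono_left (nhdsWithin_le_nhds (s := Ioi a))) ?_
  filter_upwards [Ioo_mem_nhdsGT haT] with c hc
  have hsub : Icc c T ⊆ Ioc a T := Icc_subset_Ioc hc.1 le_rfl
  exact le_mul_coth_of_riccati_le_of_Icc hm hk hc.2 (fun t ht => hf t (hsub ht))
    fun t ht => hric t (hsub ht)

end Coth

/-- ODE comparison (δ = -1 case, radial quaternionic directions):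
if `f' + f²/3 - 12 ≤ 0` on `(0,∞)` and `t·f(t) → 3` as `t → 0⁺`,
then `f(t) ≤ 6·coth(2t) = 6·cosh(2t)/sinh(2t)` for all `t > 0`. -/
theorem riccati_comparison_coth (f f' : ℝ → ℝ)
    (hderiv : ∀ t ∈ Set.Ioi (0 : ℝ), HasDerivAt f (f' t) t)
    (hineq : ∀ t ∈ Set.Ioi (0 : ℝ), f' t + (f t) ^ 2 / 3 - 12 ≤ 0)
    (hinit : Tendsto (fun t => t * f t) (nhdsWithin 0 (Set.Ioi 0)) (nhds 3)) :
    ∀ t ∈ Set.Ioi (0 : ℝ), f t ≤ 6 * Real.cosh (2 * t) / Real.sinh (2 * t) := by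
  intro t ht
  have h := riccati_comparison_coth_general (m := 3) (k := 2) three_pos two_ne_zero ht
    (fun x hx => hderiv x hx.1) fun x hx => by linarith [hineq x hx.1]
  norm_num at h
  exact h
end

section
/- Let f : (0,∞) → ℝ be a differentiable function satisfying the Riccati differential inequality f'(t) + f(t)²/3 ≤ 0 for all t > 0, together with the initial asymptotic condition lim_{t→0⁺} t·f(t) = 3. Then f(t) ≤ 3/t for every t > 0. -/
open Real Set Filter

/-!
Where `f ≠ 0`, the inequality `f' + k f² ≤ 0` says that `1/f` has slope at least `k`. If `f t > 0`,
then `f`, being nonincreasing, is positive on all of `[s, t]`, so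
`k (t - s) ≤ 1/f(t) - 1/f(s) < 1/f(t)`. Letting `s` tend to the left end of the interval gives the
comparison with `1/(k (t - a))`, the solution of the Riccati equation that blows up at `a`.
-/

section RiccatiInequality

variable {f f' : ℝ → ℝ} {D : Set ℝ} {a b k : ℝ}

theorem antitoneOn_of_riccati_le (hD : Convex ℝ D) (hk : 0 ≤ k)
    (hderiv : ∀ x ∈ D, HasDerivWithinAt f (f' x) D x)
    (hineq : ∀ x ∈ D, f' x + k * f x ^ 2 ≤ 0) :
    AntitoneOn f D := by
  refine antitoneOn_of_hasDerivWithinAt_nonpos hD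
    (fun x hx => (hderiv x hx).continuousWithinAt)
    (fun x hx => (hderiv x (interior_subset hx)).mono interior_subset) fun x hx => ?_
  have hquad : 0 ≤ k * f x ^ 2 := by positivity
  linarith [hineq x (interior_subset hx)]

theorem monotoneOn_inv_sub_mul_of_riccati_le (hD : Convex ℝ D) (hf : ∀ x ∈ D, f x ≠ 0)
    (hderiv : ∀ x ∈ D, HasDerivWithinAt f (f' x) D x)
    (hineq : ∀ x ∈ D, f' x + k * f x ^ 2 ≤ 0) :
    MonotoneOn (fun x => (f x)⁻¹ - k * x) D := by
  have hderiv_inv : ∀ x ∈ D,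
      HasDerivWithinAt (fun x => (f x)⁻¹ - k * x) (-f' x / f x ^ 2 - k) D x := fun x hx => by
    simpa only [id_eq, mul_one] using
      ((hderiv x hx).fun_inv (hf x hx)).fun_sub ((hasDerivWithinAt_id x D).const_mul k)
  refine monotoneOn_of_hasDerivWithinAt_nonneg hD
    (fun x hx => (hderiv_inv x hx).continuousWithinAt)
    (fun x hx => (hderiv_inv x (interior_subset hx)).mono interior_subset) fun x hx => ?_
  have hxD : x ∈ D := interior_subset hx
  have hsq : 0 < f x ^ 2 := sq_pos_of_ne_zero (hf x hxD)
  rw [sub_nonneg, le_div_iff₀ hsq]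
  linarith [hineq x hxD]

theorem mul_sub_mul_le_one_of_riccati_le_Icc (hab : a ≤ b) (hk : 0 ≤ k)
    (hderiv : ∀ x ∈ Icc a b, HasDerivWithinAt f (f' x) (Icc a b) x)
    (hineq : ∀ x ∈ Icc a b, f' x + k * f x ^ 2 ≤ 0) :
    k * (b - a) * f b ≤ 1 := by
  have ha : a ∈ Icc a b := left_mem_Icc.mpr hab
  have hb : b ∈ Icc a b := right_mem_Icc.mpr hab
  rcases le_or_gt (f b) 0 with hfb | hfb
  · exact (mul_nonpos_of_nonneg_of_nonpos
      (mul_nonneg hk (sub_nonneg.mpr hab)) hfb).trans zero_le_one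
  have hpos : ∀ x ∈ Icc a b, 0 < f x := fun x hx =>
    hfb.trans_le (antitoneOn_of_riccati_le (convex_Icc a b) hk hderiv hineq hx hb hx.2)
  have hinv : (f a)⁻¹ - k * a ≤ (f b)⁻¹ - k * b :=
    monotoneOn_inv_sub_mul_of_riccati_le (convex_Icc a b) (fun x hx => (hpos x hx).ne')
      hderiv hineq ha hb hab
  rw [← le_div_iff₀ hfb, one_div]
  linarith [inv_pos.mpr (hpos a ha)]

theorem mul_sub_mul_le_one_of_riccati_le_Ioc (hab : a < b) (hk : 0 ≤ k)
    (hderiv : ∀ x ∈ Ioc a b, HasDerivWithinAt f (f' x) (Ioc a b) x)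
    (hineq : ∀ x ∈ Ioc a b, f' x + k * f x ^ 2 ≤ 0) :
    k * (b - a) * f b ≤ 1 := by
  have hbound : ∀ s ∈ Ioo a b, k * (b - s) * f b ≤ 1 := fun s hs => by
    have hsub : Icc s b ⊆ Ioc a b := Icc_subset_Ioc_left hs.1
    exact mul_sub_mul_le_one_of_riccati_le_Icc hs.2.le hk
      (fun x hx => (hderiv x (hsub hx)).mono hsub) fun x hx => hineq x (hsub hx)
  have hcont : Continuous fun s => k * (b - s) * f b := by fun_prop
  have ha : a ∈ closure (Ioo a b) := by
    rw [closure_Ioo hab.ne]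
    exact left_mem_Icc.mpr hab.le
  exact closure_minimal hbound (isClosed_le hcont continuous_const) ha

end RiccatiInequality

theorem riccati_comparison_flat_general {f f' : ℝ → ℝ} {a b c : ℝ} (hab : a < b) (hc : 0 < c)
    (hderiv : ∀ t ∈ Ioc a b, HasDerivWithinAt f (f' t) (Ioc a b) t)
    (hineq : ∀ t ∈ Ioc a b, f' t + f t ^ 2 / c ≤ 0) :
    f b ≤ c / (b - a) := by
  have hbound : c⁻¹ * (b - a) * f b ≤ 1 :=
    mul_sub_mul_le_one_of_riccati_le_Ioc hab (inv_nonneg.mpr hc.le) hderiv fun t ht => by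
      simpa only [div_eq_inv_mul] using hineq t ht
  rwa [mul_assoc, inv_mul_le_iff₀ hc, mul_one, ← le_div_iff₀' (sub_pos.mpr hab)] at hbound

/-- ODE comparison (δ = 0 case, radial quaternionic directions):
if `f' + f²/3 ≤ 0` on `(0,∞)` and `t·f(t) → 3` as `t → 0⁺`,
then `f(t) ≤ 3/t` for all `t > 0`. -/
theorem riccati_comparison_flat (f f' : ℝ → ℝ)
    (hderiv : ∀ t ∈ Set.Ioi (0 : ℝ), HasDerivAt f (f' t) t)
    (hineq : ∀ t ∈ Set.Ioi (0 : ℝ), f' t + (f t) ^ 2 / 3 ≤ 0)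
    (hinit : Tendsto (fun t => t * f t) (nhdsWithin 0 (Set.Ioi 0)) (nhds 3)) :
    ∀ t ∈ Set.Ioi (0 : ℝ), f t ≤ 3 / t := fun t ht => by
  simpa only [sub_zero] using riccati_comparison_flat_general ht three_pos
    (fun s hs => (hderiv s hs.1).hasDerivWithinAt) fun s hs => hineq s hs.1
end

section
/- Let T > 0 and let f : (0,T) → ℝ be a differentiable function satisfying the Riccati differential inequality f'(t) + f(t)²/3 + 12 ≤ 0 for all t ∈ (0,T), together with the initial asymptotic condition lim_{t→0⁺} t·f(t) = 3. Then T ≤ π/2, and f(t) ≤ 6·cot(2t) for every t ∈ (0,T). -/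
open Real Set Filter

/-!
If `u' ≤ -k (1 + u²)` on `(a, b)`, then `arctan u + k t` is nonincreasing there. Comparing its value
at `t` with that at `s < t`, bounded by `π / 2 + k s`, and letting `s → a⁺` gives
`arctan u ≤ π / 2 - k (t - a)`, which is `u ≤ cot (k (t - a))`; and since `-π / 2 < arctan u`, it
also forces `k (t - a) < π`. The inequality `f' + f² / m + m k² ≤ 0` is the case `u = f / (m k)`.
-/

theorem arctan_le_pi_div_two_sub_iff_le_cot {x y : ℝ} (hy : y ∈ Ioo 0 π) :
    arctan x ≤ π / 2 - y ↔ x ≤ cot y := by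
  have hcot : tan (π / 2 - y) = cot y := by rw [tan_pi_div_two_sub, tan_inv_eq_cot]
  have harctan : arctan (cot y) = π / 2 - y := by
    rw [← hcot, arctan_tan (by linarith [hy.2]) (by linarith [hy.1])]
  rw [← harctan, arctan_le_arctan_iff]

theorem antitoneOn_arctan_add_mul {s : Set ℝ} {u u' : ℝ → ℝ} {k : ℝ} (hs : Convex ℝ s)
    (hcont : ContinuousOn u s)
    (hderiv : ∀ t ∈ interior s, HasDerivWithinAt u (u' t) (interior s) t)
    (hineq : ∀ t ∈ interior s, u' t ≤ -(k * (1 + u t ^ 2))) :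
    AntitoneOn (fun t ↦ arctan (u t) + k * t) s := by
  refine antitoneOn_of_hasDerivWithinAt_nonpos hs (by fun_prop)
    (fun t ht ↦ (hderiv t ht).arctan.add ((hasDerivWithinAt_id t _).const_mul k)) fun t ht ↦ ?_
  have hpos : 0 < 1 + u t ^ 2 := by positivity
  have harctan_deriv : 1 / (1 + u t ^ 2) * u' t ≤ -k := by
    rw [one_div, inv_mul_le_iff₀ hpos]
    linarith [hineq t ht]
  linarith

section Interval

variable {a b k : ℝ}

theorem arctan_le_pi_div_two_sub_mul_of_antitoneOn {u : ℝ → ℝ}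
    (hanti : AntitoneOn (fun t ↦ arctan (u t) + k * t) (Ioo a b)) {t : ℝ} (ht : t ∈ Ioo a b) :
    arctan (u t) ≤ π / 2 - k * (t - a) := by
  have hlim : Tendsto (fun s ↦ π / 2 + k * s) (nhdsWithin a (Ioi a)) (nhds (π / 2 + k * a)) :=
    Continuous.tendsto (by fun_prop) a |>.mono_left nhdsWithin_le_nhds
  have hle : arctan (u t) + k * t ≤ π / 2 + k * a := by
    refine ge_of_tendsto hlim ?_
    filter_upwards [Ioo_mem_nhdsGT ht.1] with s hs
    calc arctan (u t) + k * t ≤ arctan (u s) + k * s := hanti ⟨hs.1, hs.2.trans ht.2⟩ ht hs.2.le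
      _ ≤ π / 2 + k * s := by gcongr; exact (arctan_lt_pi_div_two _).le
  linarith

theorem sub_le_pi_div_and_le_cot_of_hasDerivAt_le {u u' : ℝ → ℝ} (hk : 0 < k)
    (hderiv : ∀ t ∈ Ioo a b, HasDerivAt u (u' t) t)
    (hineq : ∀ t ∈ Ioo a b, u' t ≤ -(k * (1 + u t ^ 2))) :
    b - a ≤ π / k ∧ ∀ t ∈ Ioo a b, u t ≤ cot (k * (t - a)) := by
  have hanti : AntitoneOn (fun t ↦ arctan (u t) + k * t) (Ioo a b) :=
    antitoneOn_arctan_add_mul (convex_Ioo a b) (HasDerivAt.continuousOn hderiv)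
      (by simpa only [interior_Ioo] using fun t ht ↦ (hderiv t ht).hasDerivWithinAt)
      (by simpa only [interior_Ioo] using hineq)
  have harctan : ∀ t ∈ Ioo a b, arctan (u t) ≤ π / 2 - k * (t - a) :=
    fun t ht ↦ arctan_le_pi_div_two_sub_mul_of_antitoneOn hanti ht
  have hlt_pi : ∀ t ∈ Ioo a b, k * (t - a) < π := fun t ht ↦ by
    linarith [harctan t ht, neg_pi_div_two_lt_arctan (u t)]
  refine ⟨?_, fun t ht ↦ ?_⟩
  · by_contra! hlong
    have hlt : k * (a + π / k - a) < π :=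
      hlt_pi (a + π / k) ⟨lt_add_of_pos_right a (by positivity), by linarith⟩
    rw [add_sub_cancel_left, mul_div_cancel₀ π hk.ne'] at hlt
    exact hlt.false
  · have hpos : 0 < k * (t - a) := mul_pos hk (sub_pos.2 ht.1)
    exact (arctan_le_pi_div_two_sub_iff_le_cot ⟨hpos, hlt_pi t ht⟩).1 (harctan t ht)

theorem riccati_comparison_cot_general {m : ℝ} {f f' : ℝ → ℝ} (hm : 0 < m) (hk : 0 < k)
    (hderiv : ∀ t ∈ Ioo a b, HasDerivAt f (f' t) t)
    (hineq : ∀ t ∈ Ioo a b, f' t + f t ^ 2 / m + m * k ^ 2 ≤ 0) :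
    b - a ≤ π / k ∧ ∀ t ∈ Ioo a b, f t ≤ m * k * cot (k * (t - a)) := by
  have hmk : 0 < m * k := mul_pos hm hk
  have hscaled : ∀ t ∈ Ioo a b, f' t / (m * k) ≤ -(k * (1 + (f t / (m * k)) ^ 2)) := by
    intro t ht
    have hrhs : -(k * (1 + (f t / (m * k)) ^ 2)) * (m * k) = -(f t ^ 2 / m + m * k ^ 2) := by
      field_simp
      ring
    rw [div_le_iff₀ hmk, hrhs]
    linarith [hineq t ht]
  obtain ⟨hlength, hcot⟩ := sub_le_pi_div_and_le_cot_of_hasDerivAt_le hk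
    (fun t ht ↦ (hderiv t ht).div_const (m * k)) hscaled
  exact ⟨hlength, fun t ht ↦ (div_le_iff₀' hmk).1 (hcot t ht)⟩

end Interval

/-- ODE comparison (δ = 1 case, radial quaternionic directions):
if `f' + f²/3 + 12 ≤ 0` on `(0,T)` and `t·f(t) → 3` as `t → 0⁺`,
then `T ≤ π/2` and `f(t) ≤ 6·cot(2t)` for all `t ∈ (0,T)`. -/
theorem riccati_comparison_cot (T : ℝ) (hT : 0 < T) (f f' : ℝ → ℝ)
    (hderiv : ∀ t ∈ Set.Ioo (0 : ℝ) T, HasDerivAt f (f' t) t)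
    (hineq : ∀ t ∈ Set.Ioo (0 : ℝ) T, f' t + (f t) ^ 2 / 3 + 12 ≤ 0)
    (hinit : Tendsto (fun t => t * f t) (nhdsWithin 0 (Set.Ioi 0)) (nhds 3)) :
    T ≤ Real.pi / 2 ∧ ∀ t ∈ Set.Ioo (0 : ℝ) T, f t ≤ 6 * Real.cot (2 * t) := by
  simpa only [sub_zero, show (3 : ℝ) * 2 = 6 by norm_num] using riccati_comparison_cot_general
    three_pos two_pos hderiv fun t ht ↦ by linarith [hineq t ht]
end

section
/- Let h : (0,∞) → ℝ be a differentiable function satisfying the Riccati differential inequality h'(t) + h(t)²/4 - 4 ≤ 0 for all t > 0, together with the initial asymptotic condition lim_{t→0⁺} t·h(t) = 4. Then h(t) ≤ 4·coth(t) for every t > 0. -/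
open Real Set Filter

open scoped Topology

/-!
Let `s` solve the Jacobi equation `s'' = K s`. Then `m s' / s` solves the Riccati equation
`v' + v² / m = m K`, and a function `u` with `u' + u² / m ≤ m K` satisfies
`(s² (u - m s' / s))' ≤ -(u s - m s')² / m ≤ 0`. Hence `u ≤ m s' / s` to the right of every zero
`c` of `s` at which `u` is finite, as long as `s` stays positive. For `K = k²` take
`s t = sinh (k (t - c))`. As `u` may be singular at the left end `a` of its interval, use this
for `c > a` and let `c` tend to `a`.
-/

section Riccati

variable {m k a b : ℝ} {u u' s s' K : ℝ → ℝ}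

theorem antitoneOn_mul_sq_sub_of_riccati_le {D : Set ℝ} (hD : Convex ℝ D) (hm : 0 < m)
    (hu : ∀ t ∈ D, HasDerivWithinAt u (u' t) D t)
    (hs : ∀ t ∈ D, HasDerivWithinAt s (s' t) D t)
    (hs' : ∀ t ∈ D, HasDerivWithinAt s' (K t * s t) D t)
    (hric : ∀ t ∈ D, u' t + u t ^ 2 / m ≤ m * K t) :
    AntitoneOn (fun t ↦ u t * s t ^ 2 - m * (s t * s' t)) D := by
  have hderiv : ∀ t ∈ D, HasDerivWithinAt (fun t ↦ u t * s t ^ 2 - m * (s t * s' t))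
      (s t ^ 2 * (u' t + u t ^ 2 / m - m * K t) - (u t * s t - m * s' t) ^ 2 / m) D t := by
    intro t ht
    refine (((hu t ht).mul ((hs t ht).pow 2)).sub
      (((hs t ht).mul (hs' t ht)).const_mul m)).congr_deriv ?_
    simp only [Pi.pow_apply]
    field_simp
    ring
  refine antitoneOn_of_hasDerivWithinAt_nonpos hD (fun t ht ↦ (hderiv t ht).continuousWithinAt)
    (fun t ht ↦ (hderiv t (interior_subset ht)).mono interior_subset) fun t ht ↦ ?_
  have hsq : 0 ≤ (u t * s t - m * s' t) ^ 2 / m := by positivity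
  have hdefect : s t ^ 2 * (u' t + u t ^ 2 / m - m * K t) ≤ 0 :=
    mul_nonpos_of_nonneg_of_nonpos (sq_nonneg _) (sub_nonpos.2 (hric t (interior_subset ht)))
  linarith

theorem le_mul_div_of_riccati_le_s3 (hab : a ≤ b) (hm : 0 < m)
    (hu : ∀ t ∈ Icc a b, HasDerivWithinAt u (u' t) (Icc a b) t)
    (hs : ∀ t ∈ Icc a b, HasDerivWithinAt s (s' t) (Icc a b) t)
    (hs' : ∀ t ∈ Icc a b, HasDerivWithinAt s' (K t * s t) (Icc a b) t)
    (hric : ∀ t ∈ Icc a b, u' t + u t ^ 2 / m ≤ m * K t)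
    (hsa : s a = 0) (hsb : 0 < s b) :
    u b ≤ m * s' b / s b := by
  have hle : u b * s b ^ 2 - m * (s b * s' b) ≤ u a * s a ^ 2 - m * (s a * s' a) :=
    antitoneOn_mul_sq_sub_of_riccati_le (convex_Icc a b) hm hu hs hs' hric
      (left_mem_Icc.2 hab) (right_mem_Icc.2 hab) hab
  have hprod : (u b * s b) * s b ≤ (m * s' b) * s b := by
    simp only [hsa] at hle
    linarith
  exact (le_div_iff₀ hsb).2 (le_of_mul_le_mul_right hprod hsb)

theorem le_mul_coth_of_riccati_le_Icc (hab : a < b) (hm : 0 < m) (hk : 0 < k)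
    (hu : ∀ t ∈ Icc a b, HasDerivWithinAt u (u' t) (Icc a b) t)
    (hric : ∀ t ∈ Icc a b, u' t + u t ^ 2 / m ≤ m * k ^ 2) :
    u b ≤ m * (k * cosh (k * (b - a))) / sinh (k * (b - a)) := by
  have harg : ∀ t, HasDerivAt (fun t ↦ k * (t - a)) k t := fun t ↦ by
    simpa using ((hasDerivAt_id t).sub_const a).const_mul k
  have hsinh : ∀ t, HasDerivAt (fun t ↦ sinh (k * (t - a))) (k * cosh (k * (t - a))) t :=
    fun t ↦ (harg t).sinh.congr_deriv (mul_comm _ _)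
  have hcosh : ∀ t, HasDerivAt (fun t ↦ k * cosh (k * (t - a))) (k ^ 2 * sinh (k * (t - a))) t :=
    fun t ↦ ((harg t).cosh.const_mul k).congr_deriv (by ring)
  exact le_mul_div_of_riccati_le_s3 (K := fun _ ↦ k ^ 2) hab.le hm hu
    (fun t _ ↦ (hsinh t).hasDerivWithinAt) (fun t _ ↦ (hcosh t).hasDerivWithinAt) hric
    (by simp) (sinh_pos_iff.2 (mul_pos hk (sub_pos.2 hab)))

end Riccati

theorem riccati_comparison_coth'_general {m k a b : ℝ} {h h' : ℝ → ℝ} (hm : 0 < m) (hk : 0 < k)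
    (hderiv : ∀ t ∈ Ioo a b, HasDerivAt h (h' t) t)
    (hineq : ∀ t ∈ Ioo a b, h' t + h t ^ 2 / m ≤ m * k ^ 2) :
    ∀ t ∈ Ioo a b, h t ≤ m * (k * cosh (k * (t - a))) / sinh (k * (t - a)) := by
  intro t ht
  have hsinh : sinh (k * (t - a)) ≠ 0 := (sinh_pos_iff.2 (mul_pos hk (sub_pos.2 ht.1))).ne'
  have hlim : Tendsto (fun c ↦ m * (k * cosh (k * (t - c))) / sinh (k * (t - c))) (𝓝[>] a)
      (𝓝 (m * (k * cosh (k * (t - a))) / sinh (k * (t - a)))) :=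
    ContinuousAt.continuousWithinAt (by fun_prop (disch := exact hsinh))
  refine ge_of_tendsto hlim ?_
  filter_upwards [Ioo_mem_nhdsGT ht.1] with c hc
  have hsub : Icc c t ⊆ Ioo a b := Icc_subset_Ioo hc.1 ht.2
  exact le_mul_coth_of_riccati_le_Icc hc.2 hm hk
    (fun x hx ↦ (hderiv x (hsub hx)).hasDerivWithinAt) fun x hx ↦ hineq x (hsub hx)

/-- ODE comparison (δ = -1 case, orthogonal quaternionic 4-planes):
if `h' + h²/4 - 4 ≤ 0` on `(0,∞)` and `t·h(t) → 4` as `t → 0⁺`,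
then `h(t) ≤ 4·coth(t) = 4·cosh(t)/sinh(t)` for all `t > 0`. -/
theorem riccati_comparison_coth' (h h' : ℝ → ℝ)
    (hderiv : ∀ t ∈ Set.Ioi (0 : ℝ), HasDerivAt h (h' t) t)
    (hineq : ∀ t ∈ Set.Ioi (0 : ℝ), h' t + (h t) ^ 2 / 4 - 4 ≤ 0)
    (hinit : Tendsto (fun t => t * h t) (nhdsWithin 0 (Set.Ioi 0)) (nhds 4)) :
    ∀ t ∈ Set.Ioi (0 : ℝ), h t ≤ 4 * Real.cosh t / Real.sinh t := fun t ht ↦ by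
  simpa using riccati_comparison_coth'_general (m := 4) (k := 1) (b := t + 1) four_pos one_pos
    (fun x hx ↦ hderiv x hx.1) (fun x hx ↦ by linarith [hineq x hx.1]) t ⟨ht, lt_add_one t⟩
end

section
/- Let h : (0,∞) → ℝ be a differentiable function satisfying the Riccati differential inequality h'(t) + h(t)²/4 ≤ 0 for all t > 0, together with the initial asymptotic condition lim_{t→0⁺} t·h(t) = 4. Then h(t) ≤ 4/t for every t > 0. -/
open Real Set Filter

/-! Where `h > 0`, the inequality `h' + h² / m ≤ 0` says `(1 / h)' ≥ 1 / m`. Since `h` is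
nonincreasing, `h t > 0` forces `h > 0` on all of `[s, t]`, and integrating from `s` to `t` gives
`1 / h t ≥ 1 / h s + (t - s) / m > (t - s) / m`. Let `s` tend to the left endpoint. -/

section Riccati

variable {h h' : ℝ → ℝ} {m : ℝ}

lemma antitoneOn_of_deriv_add_sq_div_nonpos {s : Set ℝ} (hs : Convex ℝ s) (hm : 0 ≤ m)
    (hcont : ContinuousOn h s) (hderiv : ∀ x ∈ interior s, HasDerivAt h (h' x) x)
    (hineq : ∀ x ∈ interior s, h' x + h x ^ 2 / m ≤ 0) : AntitoneOn h s := by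
  refine antitoneOn_of_hasDerivWithinAt_nonpos hs hcont
    (fun x hx => (hderiv x hx).hasDerivWithinAt) fun x hx => ?_
  have hsq : 0 ≤ h x ^ 2 / m := by positivity
  linarith [hineq x hx]

lemma monotoneOn_inv_sub_div_of_deriv_add_sq_div_nonpos {s : Set ℝ} (hs : Convex ℝ s)
    (hcont : ContinuousOn h s) (hne : ∀ x ∈ s, h x ≠ 0)
    (hderiv : ∀ x ∈ interior s, HasDerivAt h (h' x) x)
    (hineq : ∀ x ∈ interior s, h' x + h x ^ 2 / m ≤ 0) :
    MonotoneOn (fun x => (h x)⁻¹ - x / m) s := by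
  refine monotoneOn_of_hasDerivWithinAt_nonneg hs
    (f' := fun x => -h' x / h x ^ 2 - 1 / m)
    ((hcont.inv₀ hne).sub (by fun_prop)) (fun x hx => ?_) fun x hx => ?_
  · exact (((hderiv x hx).inv (hne x (interior_subset hx))).sub
      ((hasDerivAt_id x).div_const m)).hasDerivWithinAt
  · have hsq : 0 < h x ^ 2 := sq_pos_of_ne_zero (hne x (interior_subset hx))
    rw [sub_nonneg, le_div_iff₀ hsq, one_div_mul_eq_div]
    linarith [hineq x hx]

lemma sub_mul_lt_of_deriv_add_sq_div_nonpos {a b : ℝ} (hab : a ≤ b) (hm : 0 < m)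
    (hcont : ContinuousOn h (Icc a b)) (hderiv : ∀ x ∈ Ioo a b, HasDerivAt h (h' x) x)
    (hineq : ∀ x ∈ Ioo a b, h' x + h x ^ 2 / m ≤ 0) : (b - a) * h b < m := by
  rcases le_or_gt (h b) 0 with hb | hb
  · exact (mul_nonpos_of_nonneg_of_nonpos (sub_nonneg.2 hab) hb).trans_lt hm
  rw [← interior_Icc] at hderiv hineq
  have hpos : ∀ x ∈ Icc a b, 0 < h x := fun x hx =>
    hb.trans_le <| antitoneOn_of_deriv_add_sq_div_nonpos (convex_Icc a b) hm.le hcont hderiv hineq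
      hx (right_mem_Icc.2 hab) hx.2
  have hmono : (h a)⁻¹ - a / m ≤ (h b)⁻¹ - b / m :=
    monotoneOn_inv_sub_div_of_deriv_add_sq_div_nonpos (convex_Icc a b) hcont
      (fun x hx => (hpos x hx).ne') hderiv hineq (left_mem_Icc.2 hab) (right_mem_Icc.2 hab) hab
  have hinv : 0 < (h a)⁻¹ := inv_pos.2 (hpos a (left_mem_Icc.2 hab))
  have hlt : (b - a) / m < 1 / h b := by
    rw [sub_div, one_div]
    linarith
  simpa using (div_lt_div_iff₀ hm hb).1 hlt

theorem riccati_comparison_flat'_general {a t : ℝ} (hat : a < t) (hm : 0 < m)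
    (hcont : ContinuousOn h (Ioc a t)) (hderiv : ∀ x ∈ Ioo a t, HasDerivAt h (h' x) x)
    (hineq : ∀ x ∈ Ioo a t, h' x + h x ^ 2 / m ≤ 0) : h t ≤ m / (t - a) := by
  have hle : ∀ s ∈ Ioo a t, (t - s) * h t ≤ m := fun s hs =>
    (sub_mul_lt_of_deriv_add_sq_div_nonpos hs.2.le hm
      (hcont.mono (Icc_subset_Ioc_iff hs.2.le |>.2 ⟨hs.1, le_rfl⟩))
      (fun x hx => hderiv x ⟨hs.1.trans hx.1, hx.2⟩)
      fun x hx => hineq x ⟨hs.1.trans hx.1, hx.2⟩).le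
  have hle_left : (t - a) * h t ≤ m :=
    le_on_closure hle (by fun_prop) continuousOn_const
      (closure_Ioo hat.ne ▸ left_mem_Icc.2 hat.le)
  rwa [le_div_iff₀' (sub_pos.2 hat)]

end Riccati

/-- ODE comparison (δ = 0 case, orthogonal quaternionic 4-planes):
if `h' + h²/4 ≤ 0` on `(0,∞)` and `t·h(t) → 4` as `t → 0⁺`,
then `h(t) ≤ 4/t` for all `t > 0`. -/
theorem riccati_comparison_flat' (h h' : ℝ → ℝ)
    (hderiv : ∀ t ∈ Set.Ioi (0 : ℝ), HasDerivAt h (h' t) t)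
    (hineq : ∀ t ∈ Set.Ioi (0 : ℝ), h' t + (h t) ^ 2 / 4 ≤ 0)
    (hinit : Tendsto (fun t => t * h t) (nhdsWithin 0 (Set.Ioi 0)) (nhds 4)) :
    ∀ t ∈ Set.Ioi (0 : ℝ), h t ≤ 4 / t := by
  intro t ht
  simpa using riccati_comparison_flat'_general ht four_pos
    (fun x hx => (hderiv x hx.1).continuousAt.continuousWithinAt)
    (fun x hx => hderiv x hx.1) fun x hx => hineq x hx.1
end

section
/- Let T > 0 and let h : (0,T) → ℝ be a differentiable function satisfying the Riccati differential inequality h'(t) + h(t)²/4 + 4 ≤ 0 for all t ∈ (0,T), together with the initial asymptotic condition lim_{t→0⁺} t·h(t) = 4. Then T ≤ π, and h(t) ≤ 4·cot(t) for every t ∈ (0,T). -/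
open Real Set Filter

/-!
If `σ'' = -κ σ`, then `m σ' / σ` solves the Riccati equation `u' + u ^ 2 / m + m κ = 0`, and for a
subsolution `h` the quantity `σ ^ 2 (h - m σ' / σ)` is nonincreasing: its derivative is nonpositive
after completing a square. When `σ c = 0` it vanishes at `c`, so `h ≤ m σ' / σ` up to the next zero
of `σ`; in other words the model solution blows up to `+∞` at `c` and therefore dominates every
subsolution defined there. By continuity `σ h ≤ m σ'` persists at the next zero of `σ`, where it
would force `σ' ≥ 0`; for `σ t = sin (k (t - c))` this bounds the length of the interval of
existence by `π / k`. Finally `c` tends to the left endpoint.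
-/

section JacobiField

variable {m c d t : ℝ} {κ h h' σ σ' : ℝ → ℝ} {D : Set ℝ}

theorem hasDerivWithinAt_sq_mul_sub_of_jacobi (hm : m ≠ 0)
    (hh : HasDerivWithinAt h (h' t) D t) (hσ : HasDerivWithinAt σ (σ' t) D t)
    (hσ' : HasDerivWithinAt σ' (-(κ t * σ t)) D t) :
    HasDerivWithinAt (fun x ↦ σ x ^ 2 * h x - m * (σ x * σ' x))
      (σ t ^ 2 * (h' t + h t ^ 2 / m + m * κ t) - (σ t * h t - m * σ' t) ^ 2 / m) D t := by
  refine (((hσ.fun_pow 2).fun_mul hh).fun_sub ((hσ.fun_mul hσ').const_mul m)).congr_deriv ?_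
  field_simp
  ring

theorem antitoneOn_sq_mul_sub_of_riccati (hD : Convex ℝ D) (hm : 0 < m)
    (hh : ∀ x ∈ D, HasDerivWithinAt h (h' x) D x)
    (hle : ∀ x ∈ D, h' x + h x ^ 2 / m + m * κ x ≤ 0)
    (hσ : ∀ x ∈ D, HasDerivWithinAt σ (σ' x) D x)
    (hσ' : ∀ x ∈ D, HasDerivWithinAt σ' (-(κ x * σ x)) D x) :
    AntitoneOn (fun x ↦ σ x ^ 2 * h x - m * (σ x * σ' x)) D := by
  have hderiv x (hx : x ∈ D) :=
    hasDerivWithinAt_sq_mul_sub_of_jacobi hm.ne' (hh x hx) (hσ x hx) (hσ' x hx)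
  refine antitoneOn_of_hasDerivWithinAt_nonpos hD (fun x hx ↦ (hderiv x hx).continuousWithinAt)
    (fun x hx ↦ (hderiv x (interior_subset hx)).mono interior_subset) fun x hx ↦ ?_
  have hriccati : σ x ^ 2 * (h' x + h x ^ 2 / m + m * κ x) ≤ 0 :=
    mul_nonpos_of_nonneg_of_nonpos (sq_nonneg _) (hle x (interior_subset hx))
  have hsquare : 0 ≤ (σ x * h x - m * σ' x) ^ 2 / m := by positivity
  linarith

theorem mul_le_mul_deriv_of_riccati (hcd : c < d) (hm : 0 < m)
    (hh : ∀ x ∈ Icc c d, HasDerivWithinAt h (h' x) (Icc c d) x)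
    (hle : ∀ x ∈ Icc c d, h' x + h x ^ 2 / m + m * κ x ≤ 0)
    (hσ : ∀ x ∈ Icc c d, HasDerivWithinAt σ (σ' x) (Icc c d) x)
    (hσ' : ∀ x ∈ Icc c d, HasDerivWithinAt σ' (-(κ x * σ x)) (Icc c d) x)
    (hσc : σ c = 0) (hpos : ∀ x ∈ Ioo c d, 0 < σ x) :
    σ d * h d ≤ m * σ' d := by
  have hanti := antitoneOn_sq_mul_sub_of_riccati (convex_Icc c d) hm hh hle hσ hσ'
  have hinterior : ∀ x ∈ Ioo c d, σ x * h x ≤ m * σ' x := fun x hx ↦ by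
    have hdefect : σ x ^ 2 * h x - m * (σ x * σ' x) ≤ 0 := by
      simpa [hσc] using hanti (left_mem_Icc.2 hcd.le) (Ioo_subset_Icc_self hx) hx.1.le
    refine le_of_mul_le_mul_left ?_ (hpos x hx)
    linarith
  have hd : d ∈ Icc c d := right_mem_Icc.2 hcd.le
  have hd_closure : d ∈ closure (Ioo c d) := by rwa [closure_Ioo hcd.ne]
  exact ContinuousWithinAt.closure_le hd_closure
    (((hσ d hd).continuousWithinAt.mul (hh d hd).continuousWithinAt).mono Ioo_subset_Icc_self)
    ((continuousWithinAt_const.mul (hσ' d hd).continuousWithinAt).mono Ioo_subset_Icc_self)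
    hinterior

end JacobiField

section ConstantCurvature

variable {m k c d : ℝ} {h h' : ℝ → ℝ}

theorem sin_mul_le_mul_cos_of_riccati (hm : 0 < m) (hk : 0 < k) (hcd : c < d)
    (hd : k * (d - c) ≤ π)
    (hh : ∀ x ∈ Icc c d, HasDerivWithinAt h (h' x) (Icc c d) x)
    (hle : ∀ x ∈ Icc c d, h' x + h x ^ 2 / m + m * k ^ 2 ≤ 0) :
    sin (k * (d - c)) * h d ≤ m * (k * cos (k * (d - c))) := by
  have hphase (x : ℝ) : HasDerivAt (fun y ↦ k * (y - c)) k x := by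
    simpa using ((hasDerivAt_id x).sub_const c).const_mul k
  have hsin (x : ℝ) : HasDerivAt (fun y ↦ sin (k * (y - c))) (k * cos (k * (x - c))) x :=
    (hphase x).sin.congr_deriv (mul_comm _ _)
  have hcos (x : ℝ) :
      HasDerivAt (fun y ↦ k * cos (k * (y - c))) (-(k ^ 2 * sin (k * (x - c)))) x :=
    ((hphase x).cos.const_mul k).congr_deriv (by ring)
  refine mul_le_mul_deriv_of_riccati (κ := fun _ ↦ k ^ 2) (σ := fun x ↦ sin (k * (x - c)))
    (σ' := fun x ↦ k * cos (k * (x - c))) hcd hm hh hle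
    (fun x _ ↦ (hsin x).hasDerivWithinAt) (fun x _ ↦ (hcos x).hasDerivWithinAt) (by simp)
    fun x hx ↦ sin_pos_of_pos_of_lt_pi (mul_pos hk (sub_pos.2 hx.1)) ?_
  exact (mul_lt_mul_of_pos_left (sub_lt_sub_right hx.2 c) hk).trans_le hd

theorem sub_lt_pi_div_of_riccati (hm : 0 < m) (hk : 0 < k)
    (hh : ∀ x ∈ Icc c d, HasDerivWithinAt h (h' x) (Icc c d) x)
    (hle : ∀ x ∈ Icc c d, h' x + h x ^ 2 / m + m * k ^ 2 ≤ 0) :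
    d - c < π / k := by
  by_contra! hlong
  have hsub : Icc c (c + π / k) ⊆ Icc c d := Icc_subset_Icc_right (by linarith)
  have hphase : k * (c + π / k - c) = π := by
    rw [add_sub_cancel_left, mul_div_cancel₀ π hk.ne']
  have hend := sin_mul_le_mul_cos_of_riccati hm hk (lt_add_of_pos_right c (div_pos pi_pos hk))
    hphase.le (fun x hx ↦ (hh x (hsub hx)).mono hsub) (fun x hx ↦ hle x (hsub hx))
  rw [hphase, sin_pi, cos_pi] at hend
  linarith [mul_pos hm hk]

end ConstantCurvature

section OpenInterval

variable {m k a b t : ℝ} {h h' : ℝ → ℝ}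

theorem sub_le_pi_div_of_riccati_Ioo (hm : 0 < m) (hk : 0 < k)
    (hderiv : ∀ x ∈ Ioo a b, HasDerivAt h (h' x) x)
    (hineq : ∀ x ∈ Ioo a b, h' x + h x ^ 2 / m + m * k ^ 2 ≤ 0) :
    b - a ≤ π / k := by
  by_contra! hlong
  obtain ⟨c, hac, hcb⟩ := exists_between (lt_sub_comm.1 hlong)
  have hsub : Icc c (c + π / k) ⊆ Ioo a b := Icc_subset_Ioo hac (lt_sub_iff_add_lt.1 hcb)
  have hshort : c + π / k - c < π / k := sub_lt_pi_div_of_riccati hm hk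
    (fun x hx ↦ (hderiv x (hsub hx)).hasDerivWithinAt) fun x hx ↦ hineq x (hsub hx)
  linarith

theorem sin_mul_le_mul_cos_of_riccati_Ioo (hm : 0 < m) (hk : 0 < k)
    (hderiv : ∀ x ∈ Ioo a b, HasDerivAt h (h' x) x)
    (hineq : ∀ x ∈ Ioo a b, h' x + h x ^ 2 / m + m * k ^ 2 ≤ 0) (ht : t ∈ Ioo a b) :
    sin (k * (t - a)) * h t ≤ m * (k * cos (k * (t - a))) := by
  have hfrom_interior : ∀ c ∈ Ioo a t,
      sin (k * (t - c)) * h t ≤ m * (k * cos (k * (t - c))) := fun c hc ↦ by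
    have hsub : Icc c t ⊆ Ioo a b := Icc_subset_Ioo hc.1 ht.2
    have hh : ∀ x ∈ Icc c t, HasDerivWithinAt h (h' x) (Icc c t) x :=
      fun x hx ↦ (hderiv x (hsub hx)).hasDerivWithinAt
    have hle : ∀ x ∈ Icc c t, h' x + h x ^ 2 / m + m * k ^ 2 ≤ 0 := fun x hx ↦ hineq x (hsub hx)
    exact sin_mul_le_mul_cos_of_riccati hm hk hc.2
      ((lt_div_iff₀' hk).1 (sub_lt_pi_div_of_riccati hm hk hh hle)).le hh hle
  have ha_closure : a ∈ closure (Ioo a t) := by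
    rw [closure_Ioo ht.1.ne]
    exact left_mem_Icc.2 ht.1.le
  refine ContinuousWithinAt.closure_le ha_closure ?_ ?_ hfrom_interior <;>
    exact Continuous.continuousWithinAt (by fun_prop)

end OpenInterval

theorem riccati_comparison_cot'_general {m k a b : ℝ} {h h' : ℝ → ℝ} (hm : 0 < m) (hk : 0 < k)
    (hderiv : ∀ t ∈ Ioo a b, HasDerivAt h (h' t) t)
    (hineq : ∀ t ∈ Ioo a b, h' t + h t ^ 2 / m + m * k ^ 2 ≤ 0) :
    b - a ≤ π / k ∧ ∀ t ∈ Ioo a b, h t ≤ m * k * cot (k * (t - a)) := by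
  have hlength : b - a ≤ π / k := sub_le_pi_div_of_riccati_Ioo hm hk hderiv hineq
  refine ⟨hlength, fun t ht ↦ ?_⟩
  have hphase_pos : 0 < k * (t - a) := mul_pos hk (sub_pos.2 ht.1)
  have hphase_lt : k * (t - a) < π :=
    (lt_div_iff₀' hk).1 ((sub_lt_sub_right ht.2 a).trans_le hlength)
  have hsin_pos : 0 < sin (k * (t - a)) := sin_pos_of_pos_of_lt_pi hphase_pos hphase_lt
  rw [cot_eq_cos_div_sin, ← mul_div_assoc, le_div_iff₀' hsin_pos, mul_assoc]
  exact sin_mul_le_mul_cos_of_riccati_Ioo hm hk hderiv hineq ht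

/-- ODE comparison (δ = 1 case, orthogonal quaternionic 4-planes):
if `h' + h²/4 + 4 ≤ 0` on `(0,T)` and `t·h(t) → 4` as `t → 0⁺`,
then `T ≤ π` and `h(t) ≤ 4·cot(t)` for all `t ∈ (0,T)`. -/
theorem riccati_comparison_cot' (T : ℝ) (hT : 0 < T) (h h' : ℝ → ℝ)
    (hderiv : ∀ t ∈ Set.Ioo (0 : ℝ) T, HasDerivAt h (h' t) t)
    (hineq : ∀ t ∈ Set.Ioo (0 : ℝ) T, h' t + (h t) ^ 2 / 4 + 4 ≤ 0)
    (hinit : Tendsto (fun t => t * h t) (nhdsWithin 0 (Set.Ioi 0)) (nhds 4)) :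
    T ≤ Real.pi ∧ ∀ t ∈ Set.Ioo (0 : ℝ) T, h t ≤ 4 * Real.cot t := by
  simpa using riccati_comparison_cot'_general (m := 4) (k := 1) four_pos one_pos hderiv
    (by simpa using hineq)
end

section
/- Let n ≥ 1 be an integer and let A : (0,∞) → (0,∞) be a differentiable positive function satisfying A'(r)/A(r) ≤ 6·coth(2r) + 4(n-1)·coth(r) for all r > 0. Define V(r) = ∫₀^r A(t) dt and V_QH(r) = ∫₀^r (sinh 2t)³·(sinh t)^{4(n-1)} dt (both integrals are finite). Then for all 0 < r₁ ≤ r₂ one has V(r₂)/V(r₁) ≤ V_QH(r₂)/V_QH(r₁). -/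
open Real Set Filter intervalIntegral

/-!
If the logarithmic derivative of `f` is at most that of `g`, then `f / g` is nonincreasing. The
ratio of the integrals of `f` and `g` over `(a, x)` is a `g`-weighted mean of `f / g`, hence is
nonincreasing in `x` as well: enlarging the interval only adds smaller values of `f / g`. The
right-hand side of the hypothesis on `A' / A` is the logarithmic derivative of
`sinh (2t) ^ 3 * sinh t ^ (4(n - 1))`.
-/

theorem antitoneOn_div_of_logDeriv_le {s : Set ℝ} (hs : Convex ℝ s) {f g : ℝ → ℝ}
    (hf : ∀ x ∈ s, DifferentiableAt ℝ f x) (hg : ∀ x ∈ s, DifferentiableAt ℝ g x)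
    (hf_pos : ∀ x ∈ s, 0 < f x) (hg_pos : ∀ x ∈ s, 0 < g x)
    (hfg : ∀ x ∈ s, logDeriv f x ≤ logDeriv g x) :
    AntitoneOn (fun x ↦ f x / g x) s := by
  have hdiff : ∀ x ∈ s, DifferentiableAt ℝ (fun x ↦ f x / g x) x :=
    fun x hx ↦ (hf x hx).div (hg x hx) (hg_pos x hx).ne'
  have hderiv : ∀ x ∈ s, deriv (fun x ↦ f x / g x) x ≤ 0 := by
    intro x hx
    have hlog : deriv (fun x ↦ f x / g x) x / (f x / g x) ≤ 0 := by
      rw [← logDeriv_apply (fun x ↦ f x / g x),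
        logDeriv_div x (hf_pos x hx).ne' (hg_pos x hx).ne' (hf x hx) (hg x hx)]
      exact sub_nonpos.2 (hfg x hx)
    simpa only [zero_mul] using (div_le_iff₀ (div_pos (hf_pos x hx) (hg_pos x hx))).1 hlog
  exact antitoneOn_of_deriv_nonpos hs
    (fun x hx ↦ (hdiff x hx).continuousAt.continuousWithinAt)
    (fun x hx ↦ (hdiff x (interior_subset hx)).differentiableWithinAt)
    (fun x hx ↦ hderiv x (interior_subset hx))

theorem le_integral_div_integral_of_le_div {a b c : ℝ} {f g : ℝ → ℝ} (hab : a < b)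
    (hf : IntervalIntegrable f MeasureTheory.volume a b)
    (hg : IntervalIntegrable g MeasureTheory.volume a b)
    (hg_pos : ∀ t ∈ Ioo a b, 0 < g t) (hc : ∀ t ∈ Ioo a b, c ≤ f t / g t) :
    c ≤ (∫ t in a..b, f t) / ∫ t in a..b, g t := by
  rw [le_div_iff₀ (intervalIntegral_pos_of_pos_on hg hg_pos hab), ← integral_const_mul]
  exact integral_mono_on_of_le_Ioo hab.le (hg.const_mul c) hf
    fun t ht ↦ (le_div_iff₀ (hg_pos t ht)).1 (hc t ht)

theorem integral_div_integral_le_of_div_le {a b c : ℝ} {f g : ℝ → ℝ} (hab : a < b)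
    (hf : IntervalIntegrable f MeasureTheory.volume a b)
    (hg : IntervalIntegrable g MeasureTheory.volume a b)
    (hg_pos : ∀ t ∈ Ioo a b, 0 < g t) (hc : ∀ t ∈ Ioo a b, f t / g t ≤ c) :
    (∫ t in a..b, f t) / (∫ t in a..b, g t) ≤ c := by
  rw [div_le_iff₀ (intervalIntegral_pos_of_pos_on hg hg_pos hab), ← integral_const_mul]
  exact integral_mono_on_of_le_Ioo hab.le hf (hg.const_mul c)
    fun t ht ↦ (div_le_iff₀ (hg_pos t ht)).1 (hc t ht)

theorem integral_pos_of_pos_on_of_mem_Ioc {a b x : ℝ} {f : ℝ → ℝ}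
    (hf : IntervalIntegrable f MeasureTheory.volume a b) (hf_pos : ∀ t ∈ Ioo a b, 0 < f t)
    (hx : x ∈ Ioc a b) : 0 < ∫ t in a..x, f t :=
  intervalIntegral_pos_of_pos_on
    (hf.mono_set (uIcc_subset_uIcc_left (mem_uIcc_of_le hx.1.le hx.2)))
    (fun t ht ↦ hf_pos t ⟨ht.1, ht.2.trans_le hx.2⟩) hx.1

theorem antitoneOn_integral_div_integral {a b : ℝ} {f g : ℝ → ℝ}
    (hf : IntervalIntegrable f MeasureTheory.volume a b)
    (hg : IntervalIntegrable g MeasureTheory.volume a b)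
    (hg_pos : ∀ t ∈ Ioo a b, 0 < g t) (hfg : AntitoneOn (fun t ↦ f t / g t) (Ioo a b)) :
    AntitoneOn (fun x ↦ (∫ t in a..x, f t) / ∫ t in a..x, g t) (Ioc a b) := by
  rintro x ⟨hax, -⟩ y ⟨hay, hyb⟩ hxy
  obtain rfl | hxy := hxy.eq_or_lt
  · exact le_rfl
  have hx : x ∈ Ioo a b := ⟨hax, hxy.trans_le hyb⟩
  have hx_uIcc : x ∈ uIcc a b := mem_uIcc_of_le hax.le hx.2.le
  have hsub_left : uIcc a x ⊆ uIcc a b := uIcc_subset_uIcc_left hx_uIcc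
  have hsub_right : uIcc x y ⊆ uIcc a b :=
    uIcc_subset_uIcc hx_uIcc (mem_uIcc_of_le hay.le hyb)
  have hf_left := hf.mono_set hsub_left
  have hf_right := hf.mono_set hsub_right
  have hg_left := hg.mono_set hsub_left
  have hg_right := hg.mono_set hsub_right
  have hmem_left : Ioo a x ⊆ Ioo a b := Ioo_subset_Ioo_right hx.2.le
  have hmem_right : Ioo x y ⊆ Ioo a b := Ioo_subset_Ioo hax.le hyb
  have hg_left_pos := integral_pos_of_pos_on_of_mem_Ioc hg hg_pos ⟨hax, hx.2.le⟩
  have hg_right_pos :=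
    intervalIntegral_pos_of_pos_on hg_right (fun t ht ↦ hg_pos t (hmem_right ht)) hxy
  have hratio : (∫ t in x..y, f t) / (∫ t in x..y, g t) ≤
      (∫ t in a..x, f t) / ∫ t in a..x, g t :=
    calc (∫ t in x..y, f t) / (∫ t in x..y, g t)
      _ ≤ f x / g x :=
        integral_div_integral_le_of_div_le hxy hf_right hg_right
          (fun t ht ↦ hg_pos t (hmem_right ht)) fun t ht ↦ hfg hx (hmem_right ht) ht.1.le
      _ ≤ (∫ t in a..x, f t) / ∫ t in a..x, g t :=
        le_integral_div_integral_of_le_div hax hf_left hg_left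
          (fun t ht ↦ hg_pos t (hmem_left ht)) fun t ht ↦ hfg (hmem_left ht) hx ht.2.le
  change (∫ t in a..y, f t) / (∫ t in a..y, g t) ≤ (∫ t in a..x, f t) / ∫ t in a..x, g t
  rw [← integral_add_adjacent_intervals hf_left hf_right,
    ← integral_add_adjacent_intervals hg_left hg_right,
    div_le_div_iff₀ (add_pos hg_left_pos hg_right_pos) hg_left_pos]
  rw [div_le_div_iff₀ hg_right_pos hg_left_pos] at hratio
  linarith

theorem integral_div_integral_le_of_logDeriv_le {a x y : ℝ} {f g : ℝ → ℝ}
    (hf : ∀ t ∈ Ioo a y, DifferentiableAt ℝ f t) (hg : ∀ t ∈ Ioo a y, DifferentiableAt ℝ g t)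
    (hf_int : IntervalIntegrable f MeasureTheory.volume a y)
    (hg_int : IntervalIntegrable g MeasureTheory.volume a y)
    (hf_pos : ∀ t ∈ Ioo a y, 0 < f t) (hg_pos : ∀ t ∈ Ioo a y, 0 < g t)
    (hfg : ∀ t ∈ Ioo a y, logDeriv f t ≤ logDeriv g t) (hax : a < x) (hxy : x ≤ y) :
    (∫ t in a..y, f t) / (∫ t in a..x, f t) ≤ (∫ t in a..y, g t) / ∫ t in a..x, g t := by
  have hanti := antitoneOn_integral_div_integral hf_int hg_int hg_pos
    (antitoneOn_div_of_logDeriv_le (convex_Ioo a y) hf hg hf_pos hg_pos hfg)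
  have hx : x ∈ Ioc a y := ⟨hax, hxy⟩
  have hy : y ∈ Ioc a y := ⟨hax.trans_le hxy, le_rfl⟩
  have hg_x_pos := integral_pos_of_pos_on_of_mem_Ioc hg_int hg_pos hx
  have hmean : (∫ t in a..y, f t) / (∫ t in a..y, g t) ≤ (∫ t in a..x, f t) / ∫ t in a..x, g t :=
    hanti hx hy hxy
  rw [div_le_div_iff₀ (integral_pos_of_pos_on_of_mem_Ioc hg_int hg_pos hy) hg_x_pos] at hmean
  rw [div_le_div_iff₀ (integral_pos_of_pos_on_of_mem_Ioc hf_int hf_pos hx) hg_x_pos]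
  linarith

/-- The density `sinh (2t) ^ p * sinh t ^ q`, up to a constant factor the area of the geodesic
sphere of radius `t` in a hyperbolic space: `p` is the dimension of the space of imaginary scalars
(`0`, `1`, `3`, `7` over `ℝ`, `ℂ`, the quaternions, the octonions) and `p + q + 1` is the real
dimension. The curvature normalization is the one in which `QH^n` has scalar curvature
`-16n(n + 2)`. -/
noncomputable def hyperbolicSphereDensity (p q : ℕ) (t : ℝ) : ℝ :=
  sinh (2 * t) ^ p * sinh t ^ q

theorem hyperbolicSphereDensity_pos (p q : ℕ) {t : ℝ} (ht : 0 < t) :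
    0 < hyperbolicSphereDensity p q t :=
  mul_pos (pow_pos (sinh_pos_iff.2 (by linarith)) p) (pow_pos (sinh_pos_iff.2 ht) q)

theorem differentiable_hyperbolicSphereDensity (p q : ℕ) :
    Differentiable ℝ (hyperbolicSphereDensity p q) := by
  unfold hyperbolicSphereDensity
  fun_prop

theorem logDeriv_sinh (x : ℝ) : logDeriv sinh x = cosh x / sinh x := by
  rw [logDeriv_apply, Real.deriv_sinh]

theorem logDeriv_hyperbolicSphereDensity (p q : ℕ) {t : ℝ} (ht : t ≠ 0) :
    logDeriv (hyperbolicSphereDensity p q) t =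
      2 * p * (cosh (2 * t) / sinh (2 * t)) + q * (cosh t / sinh t) := by
  have logDeriv_sinh_two_mul :
      logDeriv (fun x ↦ sinh (2 * x)) t = 2 * (cosh (2 * t) / sinh (2 * t)) := by
    have hcomp := logDeriv_comp (f := sinh) (g := fun x : ℝ ↦ 2 * x) (x := t)
      differentiableAt_sinh (by fun_prop)
    have hlin : deriv (fun x : ℝ ↦ 2 * x) t = 2 := by simp
    rw [hlin, logDeriv_sinh, mul_comm] at hcomp
    exact hcomp
  have hsinh : sinh t ≠ 0 := sinh_ne_zero.2 ht
  have hsinh_two_mul : sinh (2 * t) ≠ 0 := sinh_ne_zero.2 (mul_ne_zero two_ne_zero ht)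
  unfold hyperbolicSphereDensity
  rw [logDeriv_mul (f := fun x ↦ sinh (2 * x) ^ p) (g := fun x ↦ sinh x ^ q) t
      (pow_ne_zero p hsinh_two_mul) (pow_ne_zero q hsinh) (by fun_prop) (by fun_prop),
    logDeriv_fun_pow (by fun_prop), logDeriv_fun_pow (by fun_prop),
    logDeriv_sinh_two_mul, logDeriv_sinh]
  ring

/-- Relative volume comparison (Corollary 2.3): if a positive differentiable
function `A` on `(0,∞)`, integrable on bounded intervals, satisfies
`A'(r)/A(r) ≤ 6·coth(2r) + 4(n-1)·coth(r)`, then with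
`V(r) = ∫₀^r A` and `V_QH(r) = ∫₀^r (sinh 2t)³ (sinh t)^{4(n-1)} dt`,
one has `V(r₂)/V(r₁) ≤ V_QH(r₂)/V_QH(r₁)` for all `0 < r₁ ≤ r₂`. -/
theorem volume_comparison_QH (n : ℕ) (hn : 1 ≤ n) (A A' : ℝ → ℝ)
    (hpos : ∀ r ∈ Set.Ioi (0 : ℝ), 0 < A r)
    (hderiv : ∀ r ∈ Set.Ioi (0 : ℝ), HasDerivAt A (A' r) r)
    (hint : ∀ r ∈ Set.Ioi (0 : ℝ), IntervalIntegrable A MeasureTheory.volume 0 r)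
    (hineq : ∀ r ∈ Set.Ioi (0 : ℝ),
      A' r / A r ≤ 6 * Real.cosh (2 * r) / Real.sinh (2 * r)
        + 4 * ((n : ℝ) - 1) * (Real.cosh r / Real.sinh r)) :
    ∀ r₁ r₂ : ℝ, 0 < r₁ → r₁ ≤ r₂ →
      (∫ t in (0 : ℝ)..r₂, A t) / (∫ t in (0 : ℝ)..r₁, A t)
        ≤ (∫ t in (0 : ℝ)..r₂, (Real.sinh (2 * t)) ^ 3 * (Real.sinh t) ^ (4 * (n - 1)))
          / (∫ t in (0 : ℝ)..r₁, (Real.sinh (2 * t)) ^ 3 * (Real.sinh t) ^ (4 * (n - 1))) := by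
  intro r₁ r₂ hr₁ hr₁₂
  refine integral_div_integral_le_of_logDeriv_le (f := A)
    (g := hyperbolicSphereDensity 3 (4 * (n - 1)))
    (fun t ht ↦ (hderiv t ht.1).differentiableAt)
    (fun t _ ↦ differentiable_hyperbolicSphereDensity _ _ t)
    (hint r₂ (hr₁.trans_le hr₁₂))
    ((differentiable_hyperbolicSphereDensity _ _).continuous.intervalIntegrable _ _)
    (fun t ht ↦ hpos t ht.1) (fun t ht ↦ hyperbolicSphereDensity_pos _ _ ht.1)
    (fun t ht ↦ ?_) hr₁ hr₁₂
  calc logDeriv A t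
    _ = A' t / A t := by rw [logDeriv_apply, (hderiv t ht.1).deriv]
    _ ≤ 6 * cosh (2 * t) / sinh (2 * t) + 4 * ((n : ℝ) - 1) * (cosh t / sinh t) := hineq t ht.1
    _ = logDeriv (hyperbolicSphereDensity 3 (4 * (n - 1))) t := by
      rw [logDeriv_hyperbolicSphereDensity _ _ ht.1.ne']
      push_cast [hn]
      ring
end

section
/- Let N ≥ 4 and let H be a symmetric N×N real matrix. Suppose there exist four pairwise distinct indices i₀, a, b, c such that H_{i₀i₀} + H_{aa} + H_{bb} + H_{cc} = 0. Then the squared Frobenius norm of H satisfies Σ_{A,B} H_{AB}² ≥ (4/3)·Σ_A H_{i₀A}². -/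
open Finset

/-!
In the total sum of squares, row `i` occurs once, column `i` supplies a second copy of the
off-diagonal part of that row, and the diagonal entries over `s` are still left over. By
Cauchy–Schwarz the vanishing partial trace makes these at least `H i i ^ 2 / #s`, so every entry
of row `i` is counted at least `1 + 1 / #s` times.
-/

lemma sum_row_add_sum_col_add_sum_diag_le {ι M : Type*} [Fintype ι] [DecidableEq ι]
    [AddCommMonoid M] [PartialOrder M] [IsOrderedAddMonoid M] {f : ι → ι → M}
    (hf : ∀ i j, 0 ≤ f i j) {i : ι} {s : Finset ι} (hi : i ∉ s) :
    ∑ j, f i j + (∑ j ∈ univ.erase i, f j i + ∑ j ∈ s, f j j) ≤ ∑ j, ∑ k, f j k := by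
  have hs : s ⊆ univ.erase i := subset_erase.mpr ⟨subset_univ s, hi⟩
  have hrow : ∀ j ∈ univ.erase i, f j i + f j j ≤ ∑ k, f j k := fun j hj ↦
    add_le_sum (fun k _ ↦ hf j k) (mem_univ i) (mem_univ j) (ne_of_mem_erase hj).symm
  calc ∑ j, f i j + (∑ j ∈ univ.erase i, f j i + ∑ j ∈ s, f j j)
      ≤ ∑ j, f i j + (∑ j ∈ univ.erase i, f j i + ∑ j ∈ univ.erase i, f j j) := by
        gcongr
        exact fun j _ _ ↦ hf j j
    _ = ∑ j, f i j + ∑ j ∈ univ.erase i, (f j i + f j j) := by rw [sum_add_distrib]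
    _ ≤ ∑ j, f i j + ∑ j ∈ univ.erase i, ∑ k, f j k := by gcongr with j hj; exact hrow j hj
    _ = ∑ j, ∑ k, f j k := add_sum_erase univ (fun j ↦ ∑ k, f j k) (mem_univ i)

section OrderedRing

variable {ι R : Type*} [CommRing R] [LinearOrder R] [IsStrictOrderedRing R]

lemma sq_le_card_mul_sum_sq_of_add_sum_eq_zero {s : Finset ι} {x : R} {f : ι → R}
    (h : x + ∑ j ∈ s, f j = 0) : x ^ 2 ≤ #s * ∑ j ∈ s, f j ^ 2 := by
  rw [eq_neg_of_add_eq_zero_left h, neg_sq]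
  exact sq_sum_le_card_mul_sum_sq

theorem frobenius_bochner_inequality_general [Fintype ι] {H : Matrix ι ι R} {i : ι}
    (hsym : ∀ j, H j i = H i j) {s : Finset ι} (hs : s.Nonempty) (hi : i ∉ s)
    (htrace : H i i + ∑ j ∈ s, H j j = 0) :
    (#s + 1) * ∑ j, H i j ^ 2 ≤ #s * ∑ j, ∑ k, H j k ^ 2 := by
  classical
  set offDiag := ∑ j ∈ univ.erase i, H i j ^ 2
  have hrow : ∑ j, H i j ^ 2 = H i i ^ 2 + offDiag :=
    (add_sum_erase univ (fun j ↦ H i j ^ 2) (mem_univ i)).symm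
  have hcol : ∑ j ∈ univ.erase i, H j i ^ 2 = offDiag := by simp only [hsym, offDiag]
  have hdiag : H i i ^ 2 ≤ #s * ∑ j ∈ s, H j j ^ 2 :=
    sq_le_card_mul_sum_sq_of_add_sum_eq_zero htrace
  have hoffDiag : offDiag ≤ #s * offDiag :=
    le_mul_of_one_le_left (sum_nonneg fun j _ ↦ sq_nonneg (H i j))
      (Nat.one_le_cast.mpr hs.card_pos)
  calc (#s + 1) * ∑ j, H i j ^ 2
      = #s * ∑ j, H i j ^ 2 + (offDiag + H i i ^ 2) := by rw [hrow]; ring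
    _ ≤ #s * ∑ j, H i j ^ 2 + (#s * offDiag + #s * ∑ j ∈ s, H j j ^ 2) := by gcongr
    _ = #s * (∑ j, H i j ^ 2 + (∑ j ∈ univ.erase i, H j i ^ 2 + ∑ j ∈ s, H j j ^ 2)) := by
        rw [hcol]; ring
    _ ≤ #s * ∑ j, ∑ k, H j k ^ 2 := by
        gcongr
        exact sum_row_add_sum_col_add_sum_diag_le (fun j k ↦ sq_nonneg (H j k)) hi

end OrderedRing

/-- Pointwise Bochner inequality (Theorem 0.5): if a symmetric `N×N` real
matrix `H` has vanishing partial trace over four pairwise distinct indices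
`i₀, a, b, c` (i.e. `H_{i₀i₀} + H_{aa} + H_{bb} + H_{cc} = 0`), then
`Σ_{A,B} H_{AB}² ≥ (4/3)·Σ_A H_{i₀A}²`. -/
theorem frobenius_bochner_inequality (N : ℕ) (hN : 4 ≤ N)
    (H : Matrix (Fin N) (Fin N) ℝ) (hsym : H.IsSymm)
    (i₀ a b c : Fin N)
    (hab : i₀ ≠ a) (hac : i₀ ≠ b) (had : i₀ ≠ c)
    (hbc : a ≠ b) (hbd : a ≠ c) (hcd : b ≠ c)
    (htrace : H i₀ i₀ + H a a + H b b + H c c = 0) :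
    (∑ A : Fin N, ∑ B : Fin N, (H A B) ^ 2)
      ≥ 4 / 3 * ∑ A : Fin N, (H i₀ A) ^ 2 := by
  have hcard : #{a, b, c} = 3 := card_eq_three.mpr ⟨a, b, c, hbc, hbd, hcd, rfl⟩
  have hi₀ : i₀ ∉ ({a, b, c} : Finset (Fin N)) := by simp [hab, hac, had]
  have hsum : ∑ j ∈ {a, b, c}, H j j = H a a + (H b b + H c c) := by
    rw [sum_insert (by simp [hbc, hbd]), sum_pair hcd]
  have key := frobenius_bochner_inequality_general (fun j ↦ hsym.apply i₀ j)
    (insert_nonempty a {b, c}) hi₀ (by rw [hsum]; linarith)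
  rw [hcard] at key
  push_cast at key
  linarith
end

section
/- Let N ≥ 4 and let H be a symmetric N×N real matrix. Suppose there exist four pairwise distinct indices i₀, a, b, c such that H_{i₀i₀} + H_{aa} + H_{bb} + H_{cc} = 0, and suppose equality holds in the Frobenius inequality, i.e. Σ_{A,B} H_{AB}² = (4/3)·Σ_A H_{i₀A}². Then there exists μ ∈ ℝ such that H_{i₀i₀} = -3μ, H_{aa} = H_{bb} = H_{cc} = μ, and H_{AB} = 0 for every pair (A,B) other than (i₀,i₀), (a,a), (b,b), (c,c). -/
open Finset

/-!
The admissible models `D = diag(-kμ, μ, …, μ, 0, …, 0)`, with `k` entries equal to `μ`, form a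
line, and vanishing of the partial trace makes `D` with `D i₀ i₀ = H i₀ i₀` the orthogonal
projection of `H` onto that line for the Frobenius inner product. Hence
`‖H - D‖² = ‖H‖² - (1 + 1/k) (H i₀ i₀)²`, and equality in the Frobenius inequality turns this into
`‖H - D‖² = (1 + 1/k) r`, where `r` is the squared norm of row `i₀` of `H - D`. That row has zero
diagonal entry and equals the corresponding column, so also `‖H - D‖² ≥ 2 r`. As `1 + 1/k < 2`
for `k ≥ 2`, it follows that `r = 0` and `H = D`.
-/

section Frobenius

variable {n R : Type*} [Fintype n] [DecidableEq n] [CommRing R]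

lemma sum_row_sq_sub_diagonal (H : Matrix n n R) (d : n → R) (i : n) :
    ∑ j, (H - Matrix.diagonal d) i j ^ 2 = ∑ j, H i j ^ 2 - 2 * (d i * H i i) + d i ^ 2 := by
  have entry (j : n) : (H - Matrix.diagonal d) i j ^ 2 =
      H i j ^ 2 + if i = j then d i ^ 2 - 2 * (d i * H i i) else 0 := by
    rw [Matrix.sub_apply, Matrix.diagonal_apply]
    split_ifs with hij
    · subst hij
      ring
    · ring
  simp only [entry, sum_add_distrib, sum_ite_eq, mem_univ, if_true]
  ring

lemma sum_sq_sub_diagonal (H : Matrix n n R) (d : n → R) :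
    ∑ i, ∑ j, (H - Matrix.diagonal d) i j ^ 2 =
      ∑ i, ∑ j, H i j ^ 2 - 2 * ∑ i, d i * H i i + ∑ i, d i ^ 2 := by
  simp only [sum_row_sq_sub_diagonal, sum_add_distrib, sum_sub_distrib, mul_sum]

end Frobenius

section RowBound

variable {n R : Type*} [Fintype n] [CommRing R] [LinearOrder R] [IsStrictOrderedRing R]
  {M : Matrix n n R}

lemma two_mul_sum_row_sq_le_sum_sq_add {i₀ : n} (hrow : ∀ j, M j i₀ = M i₀ j) :
    2 * ∑ j, M i₀ j ^ 2 ≤ ∑ i, ∑ j, M i j ^ 2 + M i₀ i₀ ^ 2 := by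
  classical
  have column_le : ∑ i ∈ univ.erase i₀, M i₀ i ^ 2 ≤ ∑ i ∈ univ.erase i₀, ∑ j, M i j ^ 2 :=
    sum_le_sum fun i _ ↦ hrow i ▸ single_le_sum (fun j _ ↦ sq_nonneg (M i j)) (mem_univ i₀)
  have split_row := add_sum_erase univ (fun j ↦ M i₀ j ^ 2) (mem_univ i₀)
  have split_rows := add_sum_erase univ (fun i ↦ ∑ j, M i j ^ 2) (mem_univ i₀)
  linarith

lemma eq_zero_of_sum_sq_nonpos (hM : ∑ i, ∑ j, M i j ^ 2 ≤ 0) : M = 0 := by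
  have row_nonneg (i : n) : 0 ≤ ∑ j, M i j ^ 2 := sum_nonneg fun j _ ↦ sq_nonneg _
  have sum_eq_zero := hM.antisymm (sum_nonneg fun i _ ↦ row_nonneg i)
  ext i j
  have row_eq_zero : ∑ j, M i j ^ 2 = 0 :=
    (sum_eq_zero_iff_of_nonneg fun i _ ↦ row_nonneg i).1 sum_eq_zero i (mem_univ i)
  exact pow_eq_zero_iff two_ne_zero |>.1 <|
    (sum_eq_zero_iff_of_nonneg fun j _ ↦ sq_nonneg (M i j)).1 row_eq_zero j (mem_univ j)

lemma eq_zero_of_sum_sq_le_mul_sum_row_sq {i₀ : n} {C : R} (hC : C < 2)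
    (hrow : ∀ j, M j i₀ = M i₀ j) (hcorner : M i₀ i₀ = 0)
    (hle : ∑ i, ∑ j, M i j ^ 2 ≤ C * ∑ j, M i₀ j ^ 2) : M = 0 := by
  have two_mul_row_le : 2 * ∑ j, M i₀ j ^ 2 ≤ C * ∑ j, M i₀ j ^ 2 := by
    simpa [hcorner] using (two_mul_sum_row_sq_le_sum_sq_add hrow).trans (add_le_add_left hle _)
  have row_nonpos : ∑ j, M i₀ j ^ 2 ≤ 0 := le_of_not_gt fun row_pos ↦
    two_mul_row_le.not_gt (mul_lt_mul_of_pos_right hC row_pos)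
  have row_eq_zero : ∑ j, M i₀ j ^ 2 = 0 :=
    row_nonpos.antisymm (sum_nonneg fun j _ ↦ sq_nonneg _)
  exact eq_zero_of_sum_sq_nonpos (by simpa [row_eq_zero] using hle)

end RowBound

section BochnerProfile

variable {n R : Type*} [DecidableEq n] [CommRing R]

/-- The diagonal of the model Hessian in the equality case of the Bochner inequality: for `i₀ ∉ s`
it takes the value `-#s * μ` at `i₀`, the value `μ` on `s`, and vanishes elsewhere. Writing it as a
difference makes its pairing with any vector computable without the condition `i₀ ∉ s`. -/
def bochnerProfile (i₀ : n) (s : Finset n) (μ : R) (i : n) : R :=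
  (if i ∈ s then μ else 0) - if i = i₀ then #s * μ else 0

variable {i₀ i : n} {s : Finset n}

lemma bochnerProfile_self (hi₀ : i₀ ∉ s) (μ : R) : bochnerProfile i₀ s μ i₀ = -(#s * μ) := by
  simp [bochnerProfile, hi₀]

lemma bochnerProfile_of_mem (hi₀ : i₀ ∉ s) (hi : i ∈ s) (μ : R) :
    bochnerProfile i₀ s μ i = μ := by
  simp [bochnerProfile, hi, ne_of_mem_of_not_mem hi hi₀]

lemma bochnerProfile_of_notMem (hne : i ≠ i₀) (hi : i ∉ s) (μ : R) :
    bochnerProfile i₀ s μ i = 0 := by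
  simp [bochnerProfile, hi, hne]

variable [Fintype n]

lemma sum_bochnerProfile_mul (i₀ : n) (s : Finset n) (μ : R) (x : n → R) :
    ∑ i, bochnerProfile i₀ s μ i * x i = μ * (∑ i ∈ s, x i - #s * x i₀) := by
  simp only [bochnerProfile, sub_mul, ite_mul, zero_mul, sum_sub_distrib, sum_ite_mem, univ_inter,
    sum_ite_eq', mem_univ, if_true, ← mul_sum]
  ring

lemma sum_bochnerProfile_sq (hi₀ : i₀ ∉ s) (μ : R) :
    ∑ i, bochnerProfile i₀ s μ i ^ 2 = #s * (#s + 1) * μ ^ 2 := by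
  have sum_on_s : ∑ i ∈ s, bochnerProfile i₀ s μ i = #s * μ := by
    rw [sum_congr rfl fun i hi ↦ bochnerProfile_of_mem hi₀ hi μ, sum_const, nsmul_eq_mul]
  simp only [sq, sum_bochnerProfile_mul, sum_on_s, bochnerProfile_self hi₀]
  ring

lemma sum_sq_sub_diagonal_bochnerProfile {H : Matrix n n R} {μ : R} (hi₀ : i₀ ∉ s)
    (htrace : H i₀ i₀ + ∑ i ∈ s, H i i = 0) (hμ : H i₀ i₀ = -(#s * μ)) :
    ∑ i, ∑ j, (H - Matrix.diagonal (bochnerProfile i₀ s μ)) i j ^ 2 =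
      ∑ i, ∑ j, H i j ^ 2 - #s * (#s + 1) * μ ^ 2 := by
  have trace_on_s : ∑ i ∈ s, H i i = #s * μ := by linear_combination htrace - hμ
  rw [sum_sq_sub_diagonal, sum_bochnerProfile_mul, sum_bochnerProfile_sq hi₀, trace_on_s, hμ]
  ring

lemma sum_row_sq_sub_diagonal_bochnerProfile {H : Matrix n n R} {μ : R} (hi₀ : i₀ ∉ s)
    (hμ : H i₀ i₀ = -(#s * μ)) :
    ∑ j, (H - Matrix.diagonal (bochnerProfile i₀ s μ)) i₀ j ^ 2 =
      ∑ j, H i₀ j ^ 2 - (#s * μ) ^ 2 := by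
  rw [sum_row_sq_sub_diagonal, bochnerProfile_self hi₀, hμ]
  ring

end BochnerProfile

theorem frobenius_bochner_rigidity_general {n K : Type*} [Fintype n] [DecidableEq n]
    [Field K] [LinearOrder K] [IsStrictOrderedRing K] {H : Matrix n n K} {i₀ : n} {s : Finset n}
    (hrow : ∀ j, H j i₀ = H i₀ j) (hi₀ : i₀ ∉ s) (hs : 1 < #s)
    (htrace : H i₀ i₀ + ∑ i ∈ s, H i i = 0)
    (heq : ∑ i, ∑ j, H i j ^ 2 = (1 + 1 / (#s : K)) * ∑ j, H i₀ j ^ 2) :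
    ∃ μ : K, H = Matrix.diagonal (bochnerProfile i₀ s μ) := by
  have one_lt_card : (1 : K) < #s := mod_cast hs
  have card_ne_zero : (#s : K) ≠ 0 := (zero_lt_one.trans one_lt_card).ne'
  obtain ⟨μ, hμ⟩ : ∃ μ, H i₀ i₀ = -(#s * μ) := ⟨-(H i₀ i₀ / #s), by field_simp⟩
  have ratio_lt_two : 1 + 1 / (#s : K) < 2 := by
    linarith [(div_lt_one (zero_lt_one.trans one_lt_card)).2 one_lt_card]
  refine ⟨μ, sub_eq_zero.1 <|
    eq_zero_of_sum_sq_le_mul_sum_row_sq (i₀ := i₀) ratio_lt_two (fun j ↦ ?_) ?_ (le_of_eq ?_)⟩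
  · obtain rfl | hj := eq_or_ne j i₀
    · rfl
    · simp [hrow, hj, hj.symm]
  · rw [Matrix.sub_apply, Matrix.diagonal_apply_eq, bochnerProfile_self hi₀, hμ, sub_self]
  · rw [sum_sq_sub_diagonal_bochnerProfile hi₀ htrace hμ,
      sum_row_sq_sub_diagonal_bochnerProfile hi₀ hμ, heq]
    field_simp

/-- Rigidity in the Bochner inequality (equation (19.6) of Theorem 0.5): if a
symmetric `N×N` real matrix `H` has vanishing partial trace
`H_{i₀i₀} + H_{aa} + H_{bb} + H_{cc} = 0` over four pairwise distinct indices
and `Σ_{A,B} H_{AB}² = (4/3)·Σ_A H_{i₀A}²`, then `H = diag(-3μ, μ, μ, μ, 0, …, 0)`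
in the obvious sense: `H_{i₀i₀} = -3μ`, `H_{aa} = H_{bb} = H_{cc} = μ`, and all
other entries vanish. -/
theorem frobenius_bochner_rigidity (N : ℕ) (hN : 4 ≤ N)
    (H : Matrix (Fin N) (Fin N) ℝ) (hsym : H.IsSymm)
    (i₀ a b c : Fin N)
    (hab : i₀ ≠ a) (hac : i₀ ≠ b) (had : i₀ ≠ c)
    (hbc : a ≠ b) (hbd : a ≠ c) (hcd : b ≠ c)
    (htrace : H i₀ i₀ + H a a + H b b + H c c = 0)
    (heq : (∑ A : Fin N, ∑ B : Fin N, (H A B) ^ 2)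
      = 4 / 3 * ∑ A : Fin N, (H i₀ A) ^ 2) :
    ∃ μ : ℝ, H i₀ i₀ = -3 * μ ∧ H a a = μ ∧ H b b = μ ∧ H c c = μ ∧
      ∀ A B : Fin N, (A, B) ≠ (i₀, i₀) → (A, B) ≠ (a, a) → (A, B) ≠ (b, b) →
        (A, B) ≠ (c, c) → H A B = 0 := by
  have hi₀ : i₀ ∉ ({a, b, c} : Finset (Fin N)) := by simp [hab, hac, had]
  have hcard : #({a, b, c} : Finset (Fin N)) = 3 := card_eq_three.2 ⟨a, b, c, hbc, hbd, hcd, rfl⟩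
  obtain ⟨μ, rfl⟩ := frobenius_bochner_rigidity_general (hsym.apply i₀) hi₀ (by simp [hcard])
    (by simpa [hbc, hbd, hcd, add_assoc] using htrace) (by rw [heq, hcard]; norm_num)
  have diag_eq_μ {i : Fin N} (hi : i ∈ ({a, b, c} : Finset (Fin N))) :
      Matrix.diagonal (bochnerProfile i₀ {a, b, c} μ) i i = μ := by
    rw [Matrix.diagonal_apply_eq, bochnerProfile_of_mem hi₀ hi]
  refine ⟨μ, by simp [bochnerProfile_self hi₀, hcard], diag_eq_μ (by simp), diag_eq_μ (by simp),
    diag_eq_μ (by simp), fun A B h₀ ha hb hc ↦ ?_⟩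
  obtain rfl | hAB := eq_or_ne A B
  · rw [Matrix.diagonal_apply_eq, bochnerProfile_of_notMem] <;> simp_all
  · exact Matrix.diagonal_apply_ne _ hAB
end

section
/- Let n ≥ 2 be an integer and let H be a symmetric 4n×4n real matrix with rows and columns indexed by {1, 2, …, 4n}. Suppose: (i) H_{1A} = 0 for every index A; (ii) H_{(n+1)(n+1)} + H_{(2n+1)(2n+1)} + H_{(3n+1)(3n+1)} = -6; (iii) for each α ∈ {2, …, n}, H_{αα} + H_{(n+α)(n+α)} + H_{(2n+α)(2n+α)} + H_{(3n+α)(3n+α)} = -4; and (iv) the squared Frobenius norm satisfies Σ_{A,B} H_{AB}² ≤ 4(n+2). Then H is diagonal, with H_{11} = 0, H_{AA} = -2 for A ∈ {n+1, 2n+1, 3n+1}, and H_{AA} = -1 for every other index A. -/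
open Finset

/-!
Let `D` be the target diagonal matrix. Weighting the partial trace constraints by the entries of `D`
(`0`, `-2` or `-1`, constant along each constraint) gives `⟪D, H⟫ ≥ ‖D‖²` for the Frobenius inner
product, while the norm bound says `‖H‖² ≤ ‖D‖²`. Hence `‖H - D‖² = ‖H‖² - 2 ⟪D, H⟫ + ‖D‖² ≤ 0`.
-/

section SumSq

variable {ι R : Type*} [CommRing R] [LinearOrder R] [IsStrictOrderedRing R] {s : Finset ι}

theorem eq_of_sum_sq_le_of_sum_sq_le_sum_mul {x y : ι → R}
    (hle : ∑ i ∈ s, x i ^ 2 ≤ ∑ i ∈ s, y i ^ 2)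
    (hinner : ∑ i ∈ s, y i ^ 2 ≤ ∑ i ∈ s, y i * x i) :
    ∀ i ∈ s, x i = y i := by
  have hexpand : ∑ i ∈ s, (x i - y i) ^ 2 =
      ∑ i ∈ s, x i ^ 2 - 2 * ∑ i ∈ s, y i * x i + ∑ i ∈ s, y i ^ 2 := by
    rw [mul_sum, ← sum_sub_distrib, ← sum_add_distrib]
    exact sum_congr rfl fun i _ => by ring
  have hzero : ∑ i ∈ s, (x i - y i) ^ 2 = 0 :=
    le_antisymm (by linarith) (sum_nonneg fun i _ => sq_nonneg _)
  intro i hi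
  have hi_zero := (sum_eq_zero_iff_of_nonneg fun i _ => sq_nonneg _).1 hzero i hi
  exact sub_eq_zero.1 (sq_eq_zero_iff.1 hi_zero)

theorem eq_diagonal_of_sum_sq_le [DecidableEq ι] {M : Matrix ι ι R} {d : ι → R}
    (hle : ∑ i ∈ s, ∑ j ∈ s, M i j ^ 2 ≤ ∑ i ∈ s, d i ^ 2)
    (hinner : ∑ i ∈ s, d i ^ 2 ≤ ∑ i ∈ s, d i * M i i) :
    ∀ i ∈ s, ∀ j ∈ s, M i j = Matrix.diagonal d i j := by
  have hsq : ∑ p ∈ s ×ˢ s, Matrix.diagonal d p.1 p.2 ^ 2 = ∑ i ∈ s, d i ^ 2 := by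
    simp [sum_product, Matrix.diagonal_apply, ite_pow]
  have hmul : ∑ p ∈ s ×ˢ s, Matrix.diagonal d p.1 p.2 * M p.1 p.2 = ∑ i ∈ s, d i * M i i := by
    simp [sum_product, Matrix.diagonal_apply, ite_mul]
  have heq := eq_of_sum_sq_le_of_sum_sq_le_sum_mul (s := s ×ˢ s) (x := fun p => M p.1 p.2)
    (y := fun p => Matrix.diagonal d p.1 p.2) (by rwa [sum_product, hsq]) (by rwa [hsq, hmul])
  exact fun i hi j hj => heq (i, j) (mk_mem_product hi hj)

end SumSq

theorem sum_Icc_one_mul {M : Type*} [AddCommMonoid M] (r n : ℕ) (g : ℕ → M) :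
    ∑ A ∈ Icc 1 (r * n), g A = ∑ α ∈ Icc 1 n, ∑ m ∈ range r, g (m * n + α) := by
  simp only [← Ico_add_one_right_eq_Icc]
  rw [sum_comm]
  induction r with
  | zero => simp
  | succ r ih =>
    have hlast : ∑ α ∈ Ico 1 (n + 1), g (r * n + α) =
        ∑ A ∈ Ico (r * n + 1) ((r + 1) * n + 1), g A := by
      rw [sum_Ico_add, add_one_mul, add_comm 1, add_comm (n + 1), ← add_assoc]
    rw [sum_range_succ, ← ih, hlast]
    exact (sum_Ico_consecutive g (by omega) (by gcongr; omega)).symm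

/-- The diagonal of the Hessian of the Busemann function in an adapted frame, indexed from `1`:
`0` in the direction `e₁`, `-2` in its images under the complex structures, which sit at the indices
`m * n + 1`, and `-1` in all other directions. -/
def busemannDiag (n A : ℕ) : ℝ :=
  if A = 1 then 0 else if n ∣ A - 1 then -2 else -1

section BusemannDiag

variable {n m α : ℕ}

@[simp]
theorem busemannDiag_one : busemannDiag n 1 = 0 := if_pos rfl

theorem busemannDiag_mul_add_one (hn : 0 < n) (hm : 0 < m) : busemannDiag n (m * n + 1) = -2 := by
  simp [busemannDiag, hn.ne', hm.ne']

theorem busemannDiag_mul_add (h2 : 2 ≤ α) (hα : α ≤ n) : busemannDiag n (m * n + α) = -1 := by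
  have hndvd : ¬ n ∣ m * n + α - 1 := by
    rw [Nat.add_sub_assoc (by omega), Nat.dvd_add_right (dvd_mul_left n m)]
    exact Nat.not_dvd_of_pos_of_lt (by omega) (by omega)
  rw [busemannDiag, if_neg (by omega), if_neg hndvd]

theorem sum_range_busemannDiag_mul_add_one (hn : 0 < n) {r : ℕ} (hr : 0 < r) (f : ℕ → ℝ) :
    ∑ m ∈ range r, busemannDiag n (m * n + 1) * f m = -2 * ∑ m ∈ Ico 1 r, f m := by
  rw [sum_range_eq_add_Ico _ hr, mul_sum, zero_mul, zero_add, busemannDiag_one, zero_mul, zero_add]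
  exact sum_congr rfl fun m hm => by rw [busemannDiag_mul_add_one hn (mem_Ico.1 hm).1]

theorem sum_range_busemannDiag_mul_add (h2 : 2 ≤ α) (hα : α ≤ n) (r : ℕ) (f : ℕ → ℝ) :
    ∑ m ∈ range r, busemannDiag n (m * n + α) * f m = -∑ m ∈ range r, f m := by
  simp only [busemannDiag_mul_add h2 hα, neg_one_mul, sum_neg_distrib]

theorem sum_range_busemannDiag_mul_add_one_sq (hn : 0 < n) {r : ℕ} (hr : 0 < r) :
    ∑ m ∈ range r, busemannDiag n (m * n + 1) ^ 2 = 4 * ((r : ℝ) - 1) := by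
  simp only [sq, sum_range_busemannDiag_mul_add_one hn hr]
  rw [sum_congr rfl fun m hm => busemannDiag_mul_add_one hn (mem_Ico.1 hm).1, sum_const,
    Nat.card_Ico, nsmul_eq_mul, Nat.cast_pred hr]
  ring

theorem sum_range_busemannDiag_mul_add_sq (h2 : 2 ≤ α) (hα : α ≤ n) (r : ℕ) :
    ∑ m ∈ range r, busemannDiag n (m * n + α) ^ 2 = r := by
  simp [busemannDiag_mul_add h2 hα]

theorem sum_busemannDiag_sq (hn : 0 < n) {r : ℕ} (hr : 0 < r) :
    ∑ A ∈ Icc 1 (r * n), busemannDiag n A ^ 2 = 4 * ((r : ℝ) - 1) + r * ((n : ℝ) - 1) := by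
  rw [sum_Icc_one_mul, ← add_sum_Ioc_eq_sum_Icc hn, sum_range_busemannDiag_mul_add_one_sq hn hr,
    sum_congr rfl fun α hα =>
      sum_range_busemannDiag_mul_add_sq (mem_Ioc.1 hα).1 (mem_Ioc.1 hα).2 r,
    sum_const, Nat.card_Ioc, nsmul_eq_mul, Nat.cast_pred hn, mul_comm (r : ℝ)]

end BusemannDiag

theorem sum_busemannDiag_sq_le_sum_mul {r n : ℕ} (hr : 0 < r) (hn : 0 < n) {h : ℕ → ℝ}
    (htr1 : ∑ m ∈ Ico 1 r, h (m * n + 1) ≤ -2 * ((r : ℝ) - 1))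
    (htr2 : ∀ α, 2 ≤ α → α ≤ n → ∑ m ∈ range r, h (m * n + α) ≤ -(r : ℝ)) :
    ∑ A ∈ Icc 1 (r * n), busemannDiag n A ^ 2 ≤ ∑ A ∈ Icc 1 (r * n), busemannDiag n A * h A := by
  simp only [sum_Icc_one_mul]
  refine sum_le_sum fun α hα => ?_
  obtain ⟨hα1, hαn⟩ := mem_Icc.1 hα
  obtain rfl | hα2 := hα1.eq_or_lt
  · rw [sum_range_busemannDiag_mul_add_one_sq hn hr,
      sum_range_busemannDiag_mul_add_one hn hr fun m => h (m * n + 1)]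
    linarith
  · rw [sum_range_busemannDiag_mul_add_sq hα2 hαn,
      sum_range_busemannDiag_mul_add hα2 hαn r fun m => h (m * n + α)]
    linarith [htr2 α hα2 hαn]

/-- Here `r` is the real dimension of the underlying division algebra: `2` for complex and `4` for
quaternionic structures. -/
theorem busemann_hessian_rigidity_general (r n : ℕ) (H : ℕ → ℕ → ℝ)
    (htr1 : ∑ m ∈ Ico 1 r, H (m * n + 1) (m * n + 1) ≤ -2 * ((r : ℝ) - 1))
    (htr2 : ∀ α, 2 ≤ α → α ≤ n → ∑ m ∈ range r, H (m * n + α) (m * n + α) ≤ -(r : ℝ))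
    (hfrob : ∑ A ∈ Icc 1 (r * n), ∑ B ∈ Icc 1 (r * n), H A B ^ 2
      ≤ 4 * ((r : ℝ) - 1) + r * ((n : ℝ) - 1)) :
    ∀ A ∈ Icc 1 (r * n), ∀ B ∈ Icc 1 (r * n), H A B = Matrix.diagonal (busemannDiag n) A B := by
  intro A hA
  have hrn : 0 < r * n := (mem_Icc.1 hA).1.trans (mem_Icc.1 hA).2
  have hr : 0 < r := Nat.pos_of_mul_pos_right hrn
  have hn : 0 < n := Nat.pos_of_mul_pos_left hrn
  rw [← sum_busemannDiag_sq hn hr] at hfrob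
  exact eq_diagonal_of_sum_sq_le hfrob
    (sum_busemannDiag_sq_le_sum_mul hr hn (h := fun A => H A A) htr1 htr2) A hA

theorem dvd_sub_one_iff_mem_of_mem_Icc {n A : ℕ} (hA : A ∈ Icc 1 (4 * n)) (hA1 : A ≠ 1) :
    n ∣ A - 1 ↔ A ∈ ({n + 1, 2 * n + 1, 3 * n + 1} : Set ℕ) := by
  rw [mem_Icc] at hA
  simp only [Set.mem_insert_iff, Set.mem_singleton_iff]
  constructor
  · rintro ⟨m, hm⟩
    have hm4 : m < 4 := Nat.lt_of_mul_lt_mul_left (a := n) (by omega)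
    interval_cases m <;> omega
  · rintro (rfl | rfl | rfl) <;> simp

/-- Hessian rigidity of the Busemann function (Part 1 of the proof of Theorem
0.6): a symmetric real matrix `H` with rows and columns indexed by
`{1, …, 4n}` (`n ≥ 2`) satisfying `H_{1A} = 0` for all `A`, the partial trace
constraints `H_{(n+1)(n+1)} + H_{(2n+1)(2n+1)} + H_{(3n+1)(3n+1)} = -6` and
`H_{αα} + H_{(n+α)(n+α)} + H_{(2n+α)(2n+α)} + H_{(3n+α)(3n+α)} = -4` for
`α ∈ {2, …, n}`, and Frobenius norm bound `Σ_{A,B} H_{AB}² ≤ 4(n+2)`, must be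
the diagonal matrix `diag(0, -1, …, -1, -2, -1, …, -1, -2, -1, …, -1, -2,
-1, …, -1)`. -/
theorem busemann_hessian_rigidity (n : ℕ) (hn : 2 ≤ n) (H : ℕ → ℕ → ℝ)
    (hsym : ∀ A ∈ Finset.Icc 1 (4 * n), ∀ B ∈ Finset.Icc 1 (4 * n), H A B = H B A)
    (hrow : ∀ A ∈ Finset.Icc 1 (4 * n), H 1 A = 0)
    (htr1 : H (n + 1) (n + 1) + H (2 * n + 1) (2 * n + 1)
      + H (3 * n + 1) (3 * n + 1) = -6)
    (htr2 : ∀ α : ℕ, 2 ≤ α → α ≤ n →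
      H α α + H (n + α) (n + α) + H (2 * n + α) (2 * n + α)
        + H (3 * n + α) (3 * n + α) = -4)
    (hfrob : ∑ A ∈ Finset.Icc 1 (4 * n), ∑ B ∈ Finset.Icc 1 (4 * n), (H A B) ^ 2
      ≤ 4 * ((n : ℝ) + 2)) :
    (∀ A ∈ Finset.Icc 1 (4 * n), ∀ B ∈ Finset.Icc 1 (4 * n), A ≠ B → H A B = 0) ∧
    H 1 1 = 0 ∧
    (∀ A ∈ ({n + 1, 2 * n + 1, 3 * n + 1} : Set ℕ), H A A = -2) ∧
    (∀ A ∈ Finset.Icc 1 (4 * n), A ≠ 1 →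
      A ∉ ({n + 1, 2 * n + 1, 3 * n + 1} : Set ℕ) → H A A = -1) := by
  have hH := busemann_hessian_rigidity_general 4 n H
    (by norm_num [sum_Ico_succ_top]; linarith)
    (fun α h2 hα => by norm_num [sum_range_succ]; linarith [htr2 α h2 hα])
    (by push_cast; linarith)
  have hdiag : ∀ A ∈ Icc 1 (4 * n), H A A = busemannDiag n A := fun A hA => by
    rw [hH A hA A hA, Matrix.diagonal_apply_eq]
  refine ⟨fun A hA B hB hAB => ?_, ?_, fun A hA => ?_, fun A hA hA1 hAn => ?_⟩
  · rw [hH A hA B hB, Matrix.diagonal_apply_ne _ hAB]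
  · exact hrow 1 (mem_Icc.2 (by omega))
  · have hA_mem : A ∈ Icc 1 (4 * n) ∧ A ≠ 1 := by
      simp only [Set.mem_insert_iff, Set.mem_singleton_iff] at hA
      rw [mem_Icc]; omega
    rw [hdiag A hA_mem.1, busemannDiag, if_neg hA_mem.2,
      if_pos ((dvd_sub_one_iff_mem_of_mem_Icc hA_mem.1 hA_mem.2).2 hA)]
  · rw [hdiag A hA, busemannDiag, if_neg hA1,
      if_neg (mt (dvd_sub_one_iff_mem_of_mem_Icc hA hA1).1 hAn)]
end
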